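/- Assume the Riemann Hypothesis. Then p_{n+1} − p_n ≪ p_n^{1/2} (log p_n)², i.e. there is an absolute constant C with p_{n+1} − p_n ≤ C p_n^{1/2} (log p_n)² for all n ≥ 1, where p_n denotes the n-th prime number. -/

import Mathlib

open Filter Real

noncomputable section

namespace PG
open Set MeasureTheory Topology

/-- the half plane -/
def U : Set ℂ := {s : ℂ | 1/2 < s.re}

lemma mem_U {s : ℂ} : s ∈ U ↔ 1/2 < s.re := Iff.rfl

lemma isOpen_U : IsOpen U := isOpen_lt continuous_const Complex.continuous_re

lemma convex_U : Convex ℝ U := convex_halfSpace_re_gt _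

lemma simply_U : IsSimplyConnected U := by
  have hne : U.Nonempty := ⟨1, by norm_num [U]⟩
  have : ContractibleSpace U := convex_U.contractibleSpace hne
  change SimplyConnectedSpace U
  infer_instance

lemma exists_log {g : ℂ → ℂ} (hg : DifferentiableOn ℂ g U) (h0 : ∀ s ∈ U, g s ≠ 0) :
    ∃ F : ℂ → ℂ, DifferentiableOn ℂ F U ∧ ∀ s ∈ U, Complex.exp (F s) = g s := by
  obtain ⟨f, hfc, hf⟩ := Complex.exists_continuousOn_eqOn_exp_comp simply_U isOpen_U hg.continuousOn
    (by rintro ⟨s, hs, h⟩; exact h0 s hs h)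
  refine ⟨f, ?_, fun s hs => hf hs⟩
  intro z hz
  have hU : U ∈ 𝓝 z := isOpen_U.mem_nhds hz
  have hc : ContinuousAt f z := hfc.continuousAt hU
  have hgd : DifferentiableAt ℂ g z := hg.differentiableAt hU
  apply DifferentiableAt.differentiableWithinAt
  have hev : f =ᶠ[𝓝 z] fun w => f z + Complex.log (g w / g z) := by
    have h1 : ∀ᶠ w in 𝓝 z, dist (f w) (f z) < 1 := hc.eventually (Metric.ball_mem_nhds _ one_pos)
    filter_upwards [h1, hU] with w hw hwU
    have : g w / g z = Complex.exp (f w - f z) := by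
      rw [Complex.exp_sub, ← hf hwU, ← hf hz]; rfl
    rw [this, Complex.log_exp]
    · ring
    · have := Complex.abs_im_le_norm (f w - f z)
      rw [dist_eq_norm] at hw
      have := abs_le.1 this
      linarith [Real.pi_gt_three]
    · have := Complex.abs_im_le_norm (f w - f z)
      rw [dist_eq_norm] at hw
      have := abs_le.1 this
      linarith [Real.pi_gt_three]
  refine DifferentiableAt.congr_of_eventuallyEq ?_ hev
  refine (differentiableAt_const _).add (DifferentiableAt.clog (hgd.div_const _) ?_)
  rw [div_self (h0 z hz)]
  simp

lemma ball_bound {F : ℂ → ℂ} {c : ℂ} {R : ℝ} (hR : 0 < R)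
    (hF : DifferentiableOn ℂ F (Metric.ball c R))
    (hpos : ∀ z ∈ Metric.ball c R, 0 < (F z).re) {z : ℂ} (hz : z ∈ Metric.ball c R) :
    ‖F z - F c‖ ≤ 2 * (F c).re * ‖z - c‖ / (R - ‖z - c‖) := by
  have hm : ∀ w ∈ Metric.ball (0:ℂ) R, c + w ∈ Metric.ball c R := by
    intro w hw; simpa using hw
  have := Complex.borelCaratheodory_zero (f := fun w => F c - F (c + w)) (M := (F c).re) (R := R)
    (z := z - c) (hpos c (Metric.mem_ball_self hR)) ?_ ?_ hR ?_ (by simp)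
  · simpa [norm_sub_rev] using this
  · refine (differentiableOn_const _).sub ?_
    exact hF.comp (by fun_prop) hm
  · intro w hw
    have := hpos _ (hm w hw)
    simp only [mem_ofPred_eq, Complex.sub_re]
    linarith
  · simpa [dist_eq_norm] using hz

lemma ball_sub_U {c : ℂ} {R : ℝ} (h : R ≤ c.re - 1/2) : Metric.ball c R ⊆ U := by
  intro z hz
  rw [Metric.mem_ball, dist_eq_norm] at hz
  have := abs_le.1 (Complex.abs_re_le_norm (z - c))
  simp only [Complex.sub_re] at this
  change 1/2 < z.re
  linarith

lemma deriv_bound {F : ℂ → ℂ} (hF : DifferentiableOn ℂ F U)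
    (hpos : ∀ z ∈ U, 0 < (F z).re) {c : ℂ} (hc : c ∈ U) :
    ‖deriv F c‖ ≤ 4 * (F c).re / (c.re - 1/2) := by
  have hR : 0 < c.re - 1/2 := sub_pos.2 hc
  set R := c.re - 1/2 with hRdef
  have hb := ball_sub_U (c := c) (R := R) le_rfl
  have h1 := Complex.norm_deriv_le_of_forall_mem_sphere_norm_le (f := fun z => F z - F c) (c := c)
    (R := R/2) (C := 2 * (F c).re) (by linarith) ?_ ?_
  · rw [deriv_sub_const] at h1
    refine h1.trans (le_of_eq ?_)
    field_simp
    ring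
  · apply DifferentiableOn.diffContOnCl
    apply ((hF.mono hb).sub_const _).mono
    exact (Metric.closure_ball_subset_closedBall).trans
      (Metric.closedBall_subset_ball (by linarith))
  · intro z hz
    have hz' : ‖z - c‖ = R / 2 := by simpa [dist_eq_norm] using hz
    have := ball_bound hR (hF.mono hb) (fun z hz => hpos z (hb hz)) (z := z)
      (by rw [Metric.mem_ball, dist_eq_norm]; linarith)
    refine this.trans (le_of_eq ?_)
    rw [hz']; field_simp; norm_num

lemma integrable_dec : Integrable (fun t : ℝ => (1 + t^2) ^ (-(3/4) : ℝ)) := by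
  have := integrable_rpow_neg_one_add_norm_sq (E := ℝ) (μ := volume) (r := 3/2) (by norm_num)
  refine this.congr (Eventually.of_forall fun t => ?_)
  simp only [Real.norm_eq_abs, sq_abs]
  norm_num

lemma dec_tendsto : Tendsto (fun t : ℝ => (1 + t^2) ^ (-(3/4) : ℝ)) atTop (𝓝 0) := by
  refine (tendsto_rpow_neg_atTop (by norm_num : (0:ℝ) < 3/4)).comp ?_
  exact tendsto_atTop_add_const_left _ _ (tendsto_pow_atTop two_ne_zero)

lemma line_integrable {G : ℂ → ℂ} {a K : ℝ} (hc : Continuous fun t : ℝ => G (a + t * Complex.I))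
    (hb : ∀ t : ℝ, ‖G (a + t * Complex.I)‖ ≤ K * (1 + t^2) ^ (-(3/4) : ℝ)) :
    Integrable fun t : ℝ => G (a + t * Complex.I) :=
  (integrable_dec.const_mul K).mono' hc.aestronglyMeasurable (Eventually.of_forall hb)

lemma strip_shift {G : ℂ → ℂ} {a b K : ℝ} (hab : a ≤ b)
    (hG : ∀ s : ℂ, a ≤ s.re → DifferentiableAt ℂ G s)
    (hb : ∀ s : ℂ, a ≤ s.re → s.re ≤ b → ‖G s‖ ≤ K * (1 + s.im^2) ^ (-(3/4) : ℝ)) :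
    ∫ t : ℝ, G (a + t * Complex.I) = ∫ t : ℝ, G (b + t * Complex.I) := by
  have hcont : ∀ σ : ℝ, a ≤ σ → Continuous fun t : ℝ => G (σ + t * Complex.I) := by
    intro σ hσ
    rw [continuous_iff_continuousAt]
    intro t
    exact ContinuousAt.comp (f := fun t : ℝ => (σ + t * Complex.I : ℂ))
      (hG _ (by simpa using hσ)).continuousAt (by fun_prop)
  have hint : ∀ σ : ℝ, a ≤ σ → σ ≤ b → Integrable fun t : ℝ => G (σ + t * Complex.I) := by
    intro σ h1 h2
    refine line_integrable (K := K) (hcont σ h1) fun t => ?_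
    simpa using hb (σ + t * Complex.I) (by simpa using h1) (by simpa using h2)
  have key : ∀ T : ℝ, ‖(∫ t in (-T)..T, G (b + t * Complex.I)) - ∫ t in (-T)..T, G (a + t * Complex.I)‖
      ≤ 2 * (K * (1 + T^2) ^ (-(3/4) : ℝ)) * (b - a) := by
    intro T
    have hr := Complex.integral_boundary_rect_eq_zero_of_continuousOn_of_differentiableOn G
      (a - T * Complex.I) (b + T * Complex.I) ?_ ?_
    · have h1 : ∀ τ : ℝ, τ^2 = T^2 → ‖∫ x in a..b, G (x + τ * Complex.I)‖ ≤
          (K * (1 + T^2) ^ (-(3/4) : ℝ)) * |b - a| := by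
        intro τ hτ
        apply intervalIntegral.norm_integral_le_of_norm_le_const
        intro x hx
        rw [uIoc_of_le hab] at hx
        have := hb (x + τ * Complex.I) (by simpa using hx.1.le) (by simpa using hx.2)
        simpa [hτ] using this
      have h2 := h1 T rfl
      have h3 := h1 (-T) (by ring)
      rw [abs_of_nonneg (by linarith)] at h2 h3
      simp at hr h3
      set A := ∫ t in (-T)..T, G (a + t * Complex.I)
      set B := ∫ t in (-T)..T, G (b + t * Complex.I)
      have : ‖B - A‖ = ‖Complex.I * (B - A)‖ := by simp
      rw [this]
      have e : Complex.I * (B - A) = (∫ x in a..b, G (x + T * Complex.I))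
        - ∫ x in a..b, G (x + -(T * Complex.I)) := by linear_combination hr
      rw [e]
      refine (norm_sub_le _ _).trans ?_
      linarith
    · intro s hs
      have := hs.1
      simp [uIcc_of_le hab] at this
      exact (hG s this.1).continuousAt.continuousWithinAt
    · intro s hs
      have := hs.1
      simp [hab] at this
      exact (hG s this.1.le).differentiableWithinAt
  have hA := intervalIntegral_tendsto_integral (hint a le_rfl hab) tendsto_neg_atTop_atBot tendsto_id
  have hB := intervalIntegral_tendsto_integral (hint b hab le_rfl) tendsto_neg_atTop_atBot tendsto_id
  have h0 : Tendsto (fun T : ℝ => 2 * (K * (1 + T^2) ^ (-(3/4) : ℝ)) * (b - a)) atTop (𝓝 0) := by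
    have := ((dec_tendsto.const_mul K).const_mul 2).mul_const (b - a)
    simpa using this
  have h1 := squeeze_zero_norm key h0
  have h2 := tendsto_nhds_unique h1 (hB.sub hA)
  exact (sub_eq_zero.1 h2.symm).symm

end PG

namespace PG
open Set MeasureTheory Topology

lemma inv_le_dec (t : ℝ) : (1 + t^2)⁻¹ ≤ (1 + t^2) ^ (-(3/4) : ℝ) := by
  rw [← Real.rpow_neg_one]
  exact Real.rpow_le_rpow_of_exponent_le (by nlinarith [sq_nonneg t]) (by norm_num)

lemma integrable_poisson {y : ℝ} (hy : 0 < y) : Integrable fun t : ℝ => (y^2 + t^2)⁻¹ := by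
  have := (integrable_inv_one_add_sq.comp_div (hy.ne')).const_mul (y^2)⁻¹
  refine this.congr (Eventually.of_forall fun t => ?_)
  change (y^2)⁻¹ * (1 + (t/y)^2)⁻¹ = _
  rw [← mul_inv]
  congr 1
  field_simp

lemma integral_poisson {y : ℝ} (hy : 0 < y) : ∫ t : ℝ, (y^2 + t^2)⁻¹ = π / y := by
  have h1 : ∀ t : ℝ, (y^2 + t^2)⁻¹ = (y^2)⁻¹ * (1 + (t/y)^2)⁻¹ := by
    intro t
    rw [← mul_inv]
    congr 1
    field_simp
  simp_rw [h1]
  rw [integral_const_mul, Measure.integral_comp_div (fun t : ℝ => (1 + t^2)⁻¹) y,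
    integral_univ_inv_one_add_sq, abs_of_pos hy]
  simp; field_simp

lemma poisson_bounded {H : ℂ → ℂ} (hH : DifferentiableOn ℂ H U) {M : ℝ} (hM : ∀ s ∈ U, ‖H s‖ ≤ M)
    {a y : ℝ} (ha : 1/2 < a) (hy : 0 < y) :
    ∫ t : ℝ, H (a + t * Complex.I) * ((y^2 + t^2)⁻¹ : ℝ) = (π / y : ℝ) * H (a + y) := by
  set p : ℂ := a + y with hp
  have hpre : p.re = a + y := by simp [hp]
  have hpim : p.im = 0 := by simp [hp]
  have hpU : p ∈ U := by change 1/2 < p.re; linarith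
  have hM0 : 0 ≤ M := (norm_nonneg _).trans (hM p hpU)
  have hds : DifferentiableOn ℂ (dslope H p) U :=
    (Complex.differentiableOn_dslope (isOpen_U.mem_nhds hpU)).2 hH
  set G : ℂ → ℂ := fun s => dslope H p s * (s - a + y)⁻¹ with hGdef
  have hG : ∀ s : ℂ, a ≤ s.re → DifferentiableAt ℂ G s := by
    intro s hs
    have hsU : s ∈ U := by change 1/2 < s.re; linarith
    refine (hds.differentiableAt (isOpen_U.mem_nhds hsU)).mul ?_
    refine DifferentiableAt.inv (by fun_prop) ?_
    intro h
    have := congrArg Complex.re h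
    simp at this; linarith
  have hslope : ∀ s ∈ U, s ≠ p → ‖dslope H p s‖ ≤ 2 * M / ‖s - p‖ := by
    intro s hs hsp
    rw [dslope_of_ne _ hsp, slope_def_field, norm_div]
    gcongr
    refine (norm_sub_le _ _).trans ?_
    linarith [hM s hs, hM p hpU]
  have hbd : ∀ b : ℝ, a ≤ b → ∃ K : ℝ, ∀ s : ℂ, a ≤ s.re → s.re ≤ b →
      ‖G s‖ ≤ K * (1 + s.im^2) ^ (-(3/4) : ℝ) := by
    intro b hab
    have hcomp : IsCompact (Icc a b ×ℂ Icc (-1:ℝ) 1) := isCompact_Icc.reProdIm isCompact_Icc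
    obtain ⟨K1, hK1⟩ := hcomp.exists_bound_of_continuousOn (f := G)
      (fun s hs => (hG s hs.1.1).continuousAt.continuousWithinAt)
    have hK10 : 0 ≤ K1 := (norm_nonneg _).trans (hK1 (a : ℂ) (by simp [Complex.mem_reProdIm, hab]))
    refine ⟨4 * M + 2 * K1, fun s h1 h2 => ?_⟩
    have hd := inv_le_dec s.im
    refine le_trans ?_ (mul_le_mul_of_nonneg_left hd (by positivity))
    by_cases ht : |s.im| ≤ 1
    · have h3 := hK1 s ⟨⟨h1, h2⟩, abs_le.1 ht⟩
      have : s.im^2 ≤ 1 := by rw [← sq_abs]; nlinarith [abs_nonneg s.im]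
      rw [← div_eq_mul_inv, le_div_iff₀ (by positivity)]
      have := mul_le_mul_of_nonneg_left this hK10
      nlinarith [norm_nonneg (G s), sq_nonneg s.im]
    · push Not at ht
      have hsp : s ≠ p := by rintro rfl; rw [hpim] at ht; simp at ht; linarith
      have hsU : s ∈ U := by change 1/2 < s.re; linarith
      have e1 := hslope s hsU hsp
      have e2 : |s.im| ≤ ‖s - p‖ := by
        have := Complex.abs_im_le_norm (s - p); simpa [hpim] using this
      have e3 : |s.im| ≤ ‖s - a + y‖ := by
        have := Complex.abs_im_le_norm (s - a + y); simpa using this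
      have ht0 : 0 < |s.im| := by linarith
      have : ‖G s‖ ≤ 2 * M / |s.im| * |s.im|⁻¹ := by
        rw [hGdef]; simp only [norm_mul, norm_inv]
        refine mul_le_mul (e1.trans ?_) ?_ (by positivity) (by positivity)
        · gcongr
        · gcongr
      refine this.trans ?_
      have h4 : 2 * M / |s.im| * |s.im|⁻¹ = 2 * M / s.im^2 := by
        rw [← sq_abs]; field_simp
      rw [h4, ← div_eq_mul_inv]
      have h5 : 1 < s.im^2 := by rw [← sq_abs]; nlinarith
      rw [div_le_div_iff₀ (by positivity) (by positivity)]
      nlinarith [mul_nonneg hM0 (by linarith : 0 ≤ s.im^2 - 1), mul_nonneg hK10 (sq_nonneg s.im)]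
  have hzero : ∫ t : ℝ, G (a + t * Complex.I) = 0 := by
    have key : ∀ B : ℝ, 0 < B → ‖∫ t : ℝ, G (a + t * Complex.I)‖ ≤ 2 * M * (π / B) := by
      intro B hB
      obtain ⟨K, hK⟩ := hbd (a + y + B) (by linarith)
      rw [strip_shift (by linarith : a ≤ a + y + B) hG hK, ← integral_poisson hB,
        ← integral_const_mul]
      refine norm_integral_le_of_norm_le ((integrable_poisson hB).const_mul _)
        (Eventually.of_forall fun t => ?_)
      set s : ℂ := ((a + y + B : ℝ) : ℂ) + t * Complex.I with hs
      have hre : s.re = a + y + B := by simp [hs]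
      have him : s.im = t := by simp [hs]
      have hsU : s ∈ U := by change 1/2 < s.re; linarith
      have hsp : s ≠ p := by
        intro h; rw [h] at hre; linarith
      have n1 : ‖s - p‖ ^ 2 = B^2 + t^2 := by
        rw [Complex.sq_norm, Complex.normSq_apply]; simp [hre, him, hpre, hpim]; ring
      have n2 : ‖s - p‖ ≤ ‖s - a + y‖ := by
        apply le_of_sq_le_sq _ (norm_nonneg _)
        rw [n1, Complex.sq_norm, Complex.normSq_apply]; simp [hre, him]; nlinarith
      have hpos : 0 < ‖s - p‖ := norm_pos_iff.2 (sub_ne_zero.2 hsp)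
      rw [hGdef]; simp only [norm_mul, norm_inv]
      calc _ ≤ 2 * M / ‖s - p‖ * ‖s - p‖⁻¹ := by
            refine mul_le_mul (hslope s hsU hsp) ?_ (by positivity) (by positivity)
            gcongr
        _ = 2 * M * (B^2 + t^2)⁻¹ := by rw [← n1]; field_simp
    have lim : Tendsto (fun B : ℝ => 2 * M * (π / B)) atTop (𝓝 0) := by
      simpa using (tendsto_const_nhds.div_atTop tendsto_id : Tendsto (fun B : ℝ => π / B) atTop (𝓝 0)).const_mul (2*M)
    have : ‖∫ t : ℝ, G (a + t * Complex.I)‖ ≤ 0 :=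
      ge_of_tendsto lim (by filter_upwards [eventually_gt_atTop 0] with B hB using key B hB)
    simpa using this
  have hval : ∀ t : ℝ, G (a + t * Complex.I) =
      H p * ((y^2 + t^2)⁻¹ : ℝ) - H (a + t * Complex.I) * ((y^2 + t^2)⁻¹ : ℝ) := by
    intro t
    have hne : (a + t * Complex.I : ℂ) ≠ p := by
      intro h; have := congrArg Complex.re h; simp [hpre] at this; linarith
    rw [hGdef]
    simp only
    rw [dslope_of_ne _ hne, slope_def_field]
    have hn1 : (a + t * Complex.I : ℂ) - p ≠ 0 := sub_ne_zero.2 hne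
    have hn2 : (a + t * Complex.I : ℂ) - a + y ≠ 0 := by
      intro h; have := congrArg Complex.re h; simp at this; linarith
    have hn3 : ((y:ℂ)^2 + (t:ℂ)^2) ≠ 0 := by
      norm_cast; positivity
    push_cast
    have e : ((a + t * Complex.I : ℂ) - p) * ((a + t * Complex.I : ℂ) - a + y) = -((y:ℂ)^2 + (t:ℂ)^2) := by
      rw [hp]; ring_nf; simp
    rw [div_mul_eq_mul_div, ← div_eq_mul_inv, div_div, mul_comm (_ + _), e]
    field_simp
    ring
  have hi1 : Integrable fun t : ℝ => H p * ((y^2 + t^2)⁻¹ : ℝ) :=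
    (integrable_poisson hy).ofReal.const_mul _
  have hcH : Continuous fun t : ℝ => H (a + t * Complex.I) := by
    rw [continuous_iff_continuousAt]
    intro t
    refine ContinuousAt.comp (f := fun t : ℝ => (a + t * Complex.I : ℂ)) (g := H) ?_ (by fun_prop)
    refine (hH.differentiableAt (isOpen_U.mem_nhds ?_)).continuousAt
    rw [mem_U]
    simpa using ha
  have hi2 : Integrable fun t : ℝ => H (a + t * Complex.I) * ((y^2 + t^2)⁻¹ : ℝ) := by
    refine (integrable_poisson hy).ofReal.bdd_mul (c := M) hcH.aestronglyMeasurable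
      (Eventually.of_forall fun t => hM _ ?_)
    rw [mem_U]
    simpa using ha
  simp_rw [hval] at hzero
  have hof : ∫ t : ℝ, (((y^2 + t^2)⁻¹ : ℝ) : ℂ) = ((π / y : ℝ) : ℂ) := by
    rw [← integral_poisson hy]
    exact integral_ofReal
  rw [integral_sub hi1 hi2, sub_eq_zero, integral_const_mul, hof] at hzero
  rw [← hzero, mul_comm]

lemma poisson_ineq {F : ℂ → ℂ} (hF : DifferentiableOn ℂ F U) (hpos : ∀ s ∈ U, 0 < (F s).re)
    {a y : ℝ} (ha : 1/2 < a) (hy : 0 < y) (T : ℝ) (hT : 0 ≤ T) :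
    ∫ t in (-T)..T, (F (a + t * Complex.I)).re * (y^2 + t^2)⁻¹ ≤ π / y * (F (a + y)).re := by
  have hlU : ∀ t : ℝ, (a + t * Complex.I : ℂ) ∈ U := by
    intro t; rw [mem_U]; simpa using ha
  have hpU : (a + y : ℂ) ∈ U := by rw [mem_U]; simp; linarith
  have hcF : Continuous fun t : ℝ => F (a + t * Complex.I) := by
    rw [continuous_iff_continuousAt]
    intro t
    exact ContinuousAt.comp (f := fun t : ℝ => (a + t * Complex.I : ℂ)) (g := F)
      (hF.differentiableAt (isOpen_U.mem_nhds (hlU t))).continuousAt (by fun_prop)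
  have hnorm : ∀ ε : ℝ, 0 < ε → ∀ s ∈ U, 1 ≤ ‖1 + ε * F s‖ ∧ ε * ‖F s‖ ≤ ‖1 + ε * F s‖ := by
    intro ε hε s hs
    have h := hpos s hs
    constructor
    · have := Complex.re_le_norm (1 + ε * F s)
      simp at this
      nlinarith [mul_pos hε h]
    · have e : ε * ‖F s‖ = ‖(ε : ℂ) * F s‖ := by simp [abs_of_pos hε]
      rw [e]
      apply le_of_sq_le_sq _ (norm_nonneg _)
      rw [Complex.sq_norm, Complex.normSq_apply, Complex.sq_norm, Complex.normSq_apply]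
      simp
      nlinarith [mul_pos hε h]
  set Fe : ℝ → ℂ → ℂ := fun ε s => F s / (1 + ε * F s) with hFe
  have hre : ∀ ε : ℝ, 0 < ε → ∀ s ∈ U, 0 ≤ (Fe ε s).re := by
    intro ε hε s hs
    have h := hpos s hs
    rw [hFe]; simp only [Complex.div_re]
    rw [← add_div]
    apply div_nonneg _ (Complex.normSq_nonneg _)
    simp
    nlinarith [mul_pos hε h, mul_nonneg hε.le (mul_self_nonneg (F s).im), mul_nonneg hε.le (mul_self_nonneg (F s).re)]
  have hstep : ∀ ε : ℝ, 0 < ε →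
      ∫ t in (-T)..T, (Fe ε (a + t * Complex.I)).re * (y^2 + t^2)⁻¹ ≤ π / y * (Fe ε (a + y)).re := by
    intro ε hε
    have hne : ∀ s ∈ U, 1 + ε * F s ≠ 0 := fun s hs h => by
      have := (hnorm ε hε s hs).1; rw [h] at this; simp at this; linarith
    have hd : DifferentiableOn ℂ (Fe ε) U := hF.div (by fun_prop) hne
    have hM : ∀ s ∈ U, ‖Fe ε s‖ ≤ 1/ε := by
      intro s hs
      have h := hnorm ε hε s hs
      rw [hFe]; simp only [norm_div]
      rw [div_le_div_iff₀ (by linarith) hε]; linarith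
    have hP := poisson_bounded hd hM ha hy
    have hcFe : Continuous fun t : ℝ => Fe ε (a + t * Complex.I) := by
      rw [continuous_iff_continuousAt]
      intro t
      exact ContinuousAt.comp (f := fun t : ℝ => (a + t * Complex.I : ℂ)) (g := Fe ε)
        (hd.differentiableAt (isOpen_U.mem_nhds (hlU t))).continuousAt (by fun_prop)
    have hi2 : Integrable fun t : ℝ => Fe ε (a + t * Complex.I) * ((y^2 + t^2)⁻¹ : ℝ) := by
      exact (integrable_poisson hy).ofReal.bdd_mul (c := 1/ε) hcFe.aestronglyMeasurable
        (Eventually.of_forall fun t => hM _ (hlU t))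
    have h1 := congrArg Complex.re hP
    have h2 : (∫ t : ℝ, Fe ε (a + t * Complex.I) * ((y^2 + t^2)⁻¹ : ℝ)).re =
        ∫ t : ℝ, (Fe ε (a + t * Complex.I)).re * (y^2 + t^2)⁻¹ := by
      rw [← RCLike.re_eq_complex_re, ← integral_re hi2]
      congr 1; ext t
      simp only [RCLike.re_eq_complex_re, Complex.re_mul_ofReal]
    rw [h2, Complex.re_ofReal_mul] at h1
    rw [← h1, intervalIntegral.integral_of_le (by linarith)]
    apply setIntegral_le_integral
    · have := hi2.re
      refine this.congr (Eventually.of_forall fun t => ?_)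
      simp only [RCLike.re_eq_complex_re, Complex.re_mul_ofReal]
    · exact Eventually.of_forall fun t => mul_nonneg (hre ε hε _ (hlU t)) (by positivity)
  have hlim : ∀ s ∈ U, Tendsto (fun ε : ℝ => Fe ε s) (𝓝[>] 0) (𝓝 (F s)) := by
    intro s hs
    have : Tendsto (fun ε : ℝ => Fe ε s) (𝓝 0) (𝓝 (F s / (1 + (0:ℝ) * F s))) := by
      apply ContinuousAt.tendsto (f := fun ε : ℝ => Fe ε s)
      rw [hFe]
      apply ContinuousAt.div (by fun_prop) (by fun_prop)
      simp
    simp at this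
    exact this.mono_left nhdsWithin_le_nhds
  refine le_of_tendsto_of_tendsto ?_ (((Complex.continuous_re.tendsto _).comp (hlim _ hpU)).const_mul (π / y))
    (f := fun ε : ℝ => ∫ t in (-T)..T, (Fe ε (a + t * Complex.I)).re * (y^2 + t^2)⁻¹) (b := 𝓝[>] 0) ?_
  · have hcP : Continuous fun t : ℝ => (y^2 + t^2)⁻¹ := by
      apply Continuous.inv₀ (by fun_prop); intro t; positivity
    apply intervalIntegral.tendsto_integral_filter_of_dominated_convergence
      (fun t => ‖F (a + t * Complex.I)‖ * (y^2 + t^2)⁻¹)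
    · filter_upwards [self_mem_nhdsWithin] with ε hε
      have hne : ∀ t : ℝ, 1 + ε * F (a + t * Complex.I) ≠ 0 := fun t h => by
        have := (hnorm ε hε _ (hlU t)).1; rw [h] at this; simp at this; linarith
      apply Continuous.aestronglyMeasurable
      exact (Complex.continuous_re.comp (hcF.div (continuous_const.add (continuous_const.mul hcF)) hne)).mul hcP
    · filter_upwards [self_mem_nhdsWithin] with ε hε
      refine Eventually.of_forall fun t _ => ?_
      have h := hnorm ε hε _ (hlU t)
      rw [norm_mul, Real.norm_of_nonneg (by positivity : 0 ≤ (y^2 + t^2)⁻¹)]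
      gcongr
      refine (Complex.abs_re_le_norm _).trans ?_
      rw [hFe]; simp only [norm_div]
      exact div_le_self (norm_nonneg _) h.1
    · exact (hcF.norm.mul hcP).intervalIntegrable _ _
    · refine Eventually.of_forall fun t _ => ?_
      exact ((Complex.continuous_re.tendsto _).comp (hlim _ (hlU t))).mul_const _
  · filter_upwards [self_mem_nhdsWithin] with ε hε using hstep ε hε

end PG

namespace PG
open Set MeasureTheory Topology

/-- fractional part, cut off at 1 -/
def fr : ℝ → ℂ := (Ioi (1:ℝ)).indicator fun t => ((t - ⌊t⌋₊ : ℝ) : ℂ)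

lemma norm_fr_le (t : ℝ) : ‖fr t‖ ≤ 1 := by
  unfold fr
  by_cases h : t ∈ Ioi (1:ℝ)
  · rw [indicator_of_mem h, Complex.norm_real, Real.norm_eq_abs, abs_le]
    have h1 := Nat.floor_le (zero_le_one.trans (mem_Ioi.1 h).le)
    have h2 := Nat.lt_floor_add_one t
    constructor <;> linarith
  · rw [indicator_of_notMem h]; simp

lemma measurable_fr : Measurable fr := by
  unfold fr
  refine Measurable.indicator ?_ measurableSet_Ioi
  have : Measurable fun t : ℝ => (⌊t⌋₊ : ℝ) := measurable_from_nat.comp Nat.measurable_floor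
  exact Complex.measurable_ofReal.comp (measurable_id.sub this)

/-- Z0 -/
def Z0 (s : ℂ) : ℂ := s - s * (s - 1) * mellin fr (-s)

lemma differentiableAt_mellin_fr {s : ℂ} (hs : s ∈ U) :
    DifferentiableAt ℂ (fun s => mellin fr (-s)) s := by
  rw [mem_U] at hs
  have : DifferentiableAt ℂ (mellin fr) (-s) := by
    apply mellin_differentiableAt_of_isBigO_rpow (a := 0) (b := -s.re - 1)
    · have : LocallyIntegrable fr := by
        have h1 : LocallyIntegrable (fun _ : ℝ => (1:ℝ)) := locallyIntegrable_const _
        exact h1.mono measurable_fr.aestronglyMeasurable (Eventually.of_forall fun t => by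
          simpa using norm_fr_le t)
      exact this.locallyIntegrableOn _
    · apply Asymptotics.IsBigO.of_bound 1
      exact Eventually.of_forall fun t => by simpa using norm_fr_le t
    · simp; linarith
    · refine Asymptotics.IsBigO.of_bound 1 ?_
      have : ∀ᶠ t : ℝ in 𝓝[>] 0, t < 1 := nhdsWithin_le_nhds (Iio_mem_nhds one_pos)
      filter_upwards [this] with t ht
      have : fr t = 0 := indicator_of_notMem (by simp; linarith) _
      rw [this]; simp; 
    · simp
  exact this.comp s (differentiable_neg s)

lemma differentiableOn_Z0 : DifferentiableOn ℂ Z0 U := by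
  intro s hs
  apply DifferentiableAt.differentiableWithinAt
  unfold Z0
  exact (differentiableAt_id).sub (DifferentiableAt.mul (by fun_prop) (differentiableAt_mellin_fr hs))

lemma mellin_fr_eq (s : ℂ) : mellin fr (-s) =
    ∫ t in Ioi (1:ℝ), ((t - ⌊t⌋₊ : ℝ) : ℂ) * (t:ℂ) ^ (-(s+1)) := by
  unfold mellin fr
  have : ∀ t : ℝ, (t:ℂ) ^ (-s - 1) • (Ioi (1:ℝ)).indicator (fun t => ((t - ⌊t⌋₊ : ℝ) : ℂ)) t
      = (Ioi (1:ℝ)).indicator (fun t => ((t - ⌊t⌋₊ : ℝ) : ℂ) * (t:ℂ) ^ (-(s+1))) t := by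
    intro t
    by_cases h : t ∈ Ioi (1:ℝ)
    · rw [indicator_of_mem h, indicator_of_mem h, smul_eq_mul, mul_comm]; congr 2; ring
    · rw [indicator_of_notMem h, indicator_of_notMem h]; simp
  simp_rw [this]
  rw [setIntegral_indicator measurableSet_Ioi]
  congr 2
  ext x; simp

lemma norm_mellin_fr {s : ℂ} (hs : s ∈ U) : ‖mellin fr (-s)‖ ≤ 2 := by
  rw [mem_U] at hs
  rw [mellin_fr_eq]
  have h1 : ∫ t in Ioi (1:ℝ), t ^ (-(s.re+1)) = 1 / s.re := by
    rw [integral_Ioi_rpow_of_lt (by linarith) one_pos]; simp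
  calc _ ≤ ∫ t in Ioi (1:ℝ), t ^ (-(s.re+1)) := by
        apply norm_integral_le_of_norm_le (integrableOn_Ioi_rpow_of_lt (by linarith) one_pos)
        rw [ae_restrict_iff' measurableSet_Ioi]
        refine Eventually.of_forall fun t ht => ?_
        have h2 := norm_fr_le t
        unfold fr at h2
        rw [indicator_of_mem ht] at h2
        rw [norm_mul, Complex.norm_cpow_eq_rpow_re_of_pos (zero_lt_one.trans ht)]
        simp only [Complex.neg_re, Complex.add_re, Complex.one_re]
        have : 0 ≤ t ^ (-(s.re + 1)) := Real.rpow_nonneg (zero_lt_one.trans ht).le _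
        nlinarith
    _ ≤ 2 := by rw [h1, div_le_iff₀ (by linarith)]; linarith

lemma Z0_eq {s : ℂ} (hs : 1 < s.re) : Z0 s = (s - 1) * riemannZeta s := by
  have hs1 : s - 1 ≠ 0 := by
    intro h; have := congrArg Complex.re h; simp at this; try linarith
  have h1 := LSeries_eq_mul_integral_of_nonneg (fun _ => 1) (r := 1) zero_le_one hs ?_ (by simp)
  · have e1 : LSeries (fun n => ((1:ℝ):ℂ)) s = riemannZeta s := by
      rw [← LSeries_one_eq_riemannZeta hs]; congr 1
    rw [e1] at h1
    have h2 : ∫ t in Ioi (1:ℝ), (t:ℂ) ^ (-s) = 1 / (s - 1) := by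
      rw [integral_Ioi_cpow_of_lt (by simpa using hs) one_pos]
      simp
      rw [show -s + 1 = -(s-1) by ring]; field_simp
    have i1 : IntegrableOn (fun t : ℝ => (t:ℂ) ^ (-s)) (Ioi 1) :=
      integrableOn_Ioi_cpow_of_lt (by simpa using hs) one_pos
    have i2 : IntegrableOn (fun t : ℝ => ((t - ⌊t⌋₊ : ℝ) : ℂ) * (t:ℂ) ^ (-(s+1))) (Ioi 1) := by
      have : IntegrableOn (fun t : ℝ => (t:ℂ) ^ (-(s+1))) (Ioi 1) :=
        integrableOn_Ioi_cpow_of_lt (by simp; linarith) one_pos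
      refine Integrable.bdd_mul (c := 1) this ?_ ?_
      · have : Measurable fun t : ℝ => (⌊t⌋₊ : ℝ) := measurable_from_nat.comp Nat.measurable_floor
        exact (Complex.measurable_ofReal.comp (measurable_id.sub this)).aestronglyMeasurable
      · rw [ae_restrict_iff' measurableSet_Ioi]
        refine Eventually.of_forall fun t ht => ?_
        have h2 := norm_fr_le t
        unfold fr at h2
        rwa [indicator_of_mem ht] at h2
    have h3 : ∫ t in Ioi (1:ℝ), (∑ k ∈ Finset.Icc 1 ⌊t⌋₊, ((1:ℝ):ℂ)) * (t:ℂ) ^ (-(s + 1)) =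
        1 / (s - 1) - mellin fr (-s) := by
      rw [mellin_fr_eq, ← h2, ← integral_sub i1 i2]
      apply setIntegral_congr_fun measurableSet_Ioi
      intro t ht
      have ht0 : (t:ℂ) ≠ 0 := by
        have : (0:ℝ) < t := zero_lt_one.trans ht
        exact_mod_cast this.ne'
      have : (t:ℂ) ^ (-s) = t * (t:ℂ) ^ (-(s+1)) := by
        rw [show -s = 1 + -(s+1) by ring, Complex.cpow_add _ _ ht0, Complex.cpow_one]
      simp only [this]
      simp
      ring
    rw [h3] at h1
    rw [h1, Z0]
    field_simp
  · simp only [Finset.sum_const, Nat.card_Icc, add_tsub_cancel_right, nsmul_eq_mul, mul_one, Real.rpow_one]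
    exact Asymptotics.isBigO_refl _ _

/-- Z -/
def Z : ℂ → ℂ := Function.update (fun s => (s - 1) * riemannZeta s) 1 1

lemma Z_of_ne {s : ℂ} (h : s ≠ 1) : Z s = (s - 1) * riemannZeta s := by
  unfold Z; rw [Function.update_of_ne h]

lemma differentiableOn_Z : DifferentiableOn ℂ Z U := by
  have h1 : (1:ℂ) ∈ U := by rw [mem_U]; norm_num
  rw [← Complex.differentiableOn_compl_singleton_and_continuousAt_iff (isOpen_U.mem_nhds h1)]
  constructor
  · intro s hs
    have hs1 : s ≠ 1 := hs.2
    apply DifferentiableAt.differentiableWithinAt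
    refine DifferentiableAt.congr_of_eventuallyEq (f := fun s => (s - 1) * riemannZeta s) ?_ ?_
    · exact DifferentiableAt.mul (by fun_prop) (differentiableAt_riemannZeta hs1)
    · filter_upwards [isOpen_ne.mem_nhds hs1] with w hw using Z_of_ne hw
  · exact continuousAt_update_same.2 riemannZeta_residue_one

lemma Z_eq_Z0 : EqOn Z Z0 U := by
  have h2 : (2:ℂ) ∈ U := by rw [mem_U]; norm_num
  refine AnalyticOnNhd.eqOn_of_preconnected_of_eventuallyEq (differentiableOn_Z.analyticOnNhd isOpen_U)
    (differentiableOn_Z0.analyticOnNhd isOpen_U) convex_U.isPreconnected h2 ?_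
  have : {s : ℂ | 1 < s.re} ∈ 𝓝 (2:ℂ) :=
    (isOpen_lt continuous_const Complex.continuous_re).mem_nhds (by simp)
  filter_upwards [this] with s hs
  rw [Z0_eq hs, Z_of_ne]
  rintro rfl; simp at hs

lemma norm_Z_le {s : ℂ} (hs : s ∈ U) : ‖Z s‖ ≤ 8 * ‖s‖^2 := by
  rw [Z_eq_Z0 hs, Z0]
  have h1 := norm_mellin_fr hs
  have h2 : 1/2 ≤ ‖s‖ := by
    have := Complex.re_le_norm s; rw [mem_U] at hs; linarith
  have h3 : ‖s - 1‖ ≤ ‖s‖ + 1 := by simpa using norm_sub_le s 1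
  calc _ ≤ ‖s‖ + ‖s‖ * ‖s - 1‖ * ‖mellin fr (-s)‖ := by
        refine (norm_sub_le _ _).trans ?_; simp
    _ ≤ ‖s‖ + ‖s‖ * (‖s‖ + 1) * 2 := by gcongr
    _ ≤ _ := by nlinarith

lemma Z_ne_zero (hRH : RiemannHypothesis) {s : ℂ} (hs : s ∈ U) : Z s ≠ 0 := by
  rw [mem_U] at hs
  by_cases h : s = 1
  · rw [h]; unfold Z; simp
  · rw [Z_of_ne h]
    refine mul_ne_zero (sub_ne_zero.2 h) fun h0 => ?_
    have := hRH s h0 ?_ h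
    · linarith
    · rintro ⟨n, rfl⟩
      simp at hs
      have : (0:ℝ) ≤ n := n.cast_nonneg
      linarith

lemma norm_zeta_ge {s : ℂ} (hs : 2 ≤ s.re) : 1/4 ≤ ‖riemannZeta s‖ := by
  have hs1 : 1 < s.re := by linarith
  have hz := zeta_eq_tsum_one_div_nat_add_one_cpow hs1
  have hS : Summable fun n : ℕ => (1:ℝ) / ((n+1 : ℕ):ℝ)^2 :=
    (summable_nat_add_iff 1).2 hasSum_zeta_two.summable
  have hv : ∑' n : ℕ, (1:ℝ) / ((n+1 : ℕ):ℝ)^2 = π^2/6 := by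
    have := hasSum_zeta_two.summable.tsum_eq_zero_add
    rw [hasSum_zeta_two.tsum_eq] at this
    simpa using this.symm
  have hb : ∀ n : ℕ, ‖1 / ((n:ℂ) + 1) ^ s‖ ≤ (1:ℝ) / ((n+1 : ℕ):ℝ)^2 := by
    intro n
    have : ((n:ℂ) + 1) = (((n+1 : ℕ) : ℝ) : ℂ) := by push_cast; ring
    rw [this, norm_div, norm_one, Complex.norm_cpow_eq_rpow_re_of_pos (by positivity)]
    gcongr
    rw [← Real.rpow_natCast]
    apply Real.rpow_le_rpow_of_exponent_le
    · push_cast; linarith [(n.cast_nonneg : (0:ℝ) ≤ n)]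
    · simpa using hs
  have hSc : Summable fun n : ℕ => 1 / ((n:ℂ) + 1) ^ s := Summable.of_norm_bounded hS hb
  rw [hSc.tsum_eq_zero_add] at hz
  have hS1 := (summable_nat_add_iff 1).2 hS
  rw [hS.tsum_eq_zero_add] at hv
  have h3 : ‖∑' n : ℕ, 1 / (((n+1 : ℕ):ℂ) + 1) ^ s‖ ≤ ∑' n : ℕ, (1:ℝ) / ((n+1+1 : ℕ):ℝ)^2 :=
    tsum_of_norm_bounded hS1.hasSum fun n => hb (n+1)
  simp only [Nat.cast_zero, zero_add, Complex.one_cpow, div_one] at hz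
  simp only [zero_add, Nat.cast_one, one_pow, div_one] at hv
  have h4 := norm_sub_norm_le (1:ℂ) (-∑' n : ℕ, 1 / (((n+1 : ℕ):ℂ) + 1) ^ s)
  rw [sub_neg_eq_add, ← hz, norm_neg, norm_one] at h4
  have hpi : π^2 < 10.24 := by nlinarith [Real.pi_lt_d2, Real.pi_pos]
  linarith

theorem exists_F (hRH : RiemannHypothesis) : ∃ F : ℂ → ℂ, DifferentiableOn ℂ F U ∧
    (∀ s ∈ U, 0 < (F s).re) ∧
    (∀ s : ℂ, 1 < s.re → deriv F s = 2 / s - 1 / (s - 1) +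
      LSeries (fun n => (ArithmeticFunction.vonMangoldt n : ℂ)) s) ∧
    (∀ s : ℂ, 2 ≤ s.re → (F s).re ≤ Real.log (128 * ‖s‖)) := by
  have hs0 : ∀ s ∈ U, s ≠ 0 := by
    rintro s hs rfl; rw [mem_U] at hs; simp at hs; linarith
  obtain ⟨F, hF, hexp⟩ := exists_log (g := fun s => 16 * s^2 / Z s)
    (DifferentiableOn.div (by fun_prop) differentiableOn_Z fun s hs => Z_ne_zero hRH hs)
    (fun s hs => div_ne_zero (by simpa using hs0 s hs) (Z_ne_zero hRH hs))
  have hre : ∀ s ∈ U, Real.exp (F s).re = 16 * ‖s‖^2 / ‖Z s‖ := by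
    intro s hs
    have := congrArg norm (hexp s hs)
    simpa [Complex.norm_exp] using this
  refine ⟨F, hF, ?_, ?_, ?_⟩
  · intro s hs
    have h := hre s hs
    have hZ : 0 < ‖Z s‖ := norm_pos_iff.2 (Z_ne_zero hRH hs)
    have : 1 < Real.exp (F s).re := by
      rw [h, lt_div_iff₀ hZ]
      have := norm_Z_le hs
      have : 0 < ‖s‖^2 := by have := norm_pos_iff.2 (hs0 s hs); positivity
      linarith
    exact Real.one_lt_exp_iff.1 this
  · intro s hs
    have hsU : s ∈ U := by rw [mem_U]; linarith
    have hs1 : s ≠ 1 := by rintro rfl; simp at hs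
    have hN := isOpen_U.mem_nhds hsU
    have hFd := (hF.differentiableAt hN).hasDerivAt
    have hz0 : riemannZeta s ≠ 0 := riemannZeta_ne_zero_of_one_lt_re hs
    have hzd := (differentiableAt_riemannZeta hs1).hasDerivAt
    rw [ArithmeticFunction.LSeries_vonMangoldt_eq_deriv_riemannZeta_div hs]
    have hA := hFd.cexp.mul (((hasDerivAt_id s).sub_const 1).mul hzd)
    have hB : HasDerivAt (fun s : ℂ => 16 * s^2) (16 * (2 * s)) s := by
      simpa using (hasDerivAt_pow 2 s).const_mul (16:ℂ)
    have hE : (fun s : ℂ => 16 * s^2) =ᶠ[𝓝 s] (fun s => Complex.exp (F s)) * ((fun s => id s - 1) * riemannZeta) := by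
      filter_upwards [hN, isOpen_ne.mem_nhds hs1] with w hw hw1
      simp only [Pi.mul_apply, id]
      rw [← Z_of_ne hw1, hexp w hw, div_mul_cancel₀ _ (Z_ne_zero hRH hw)]
    have hu := (hA.congr_of_eventuallyEq hE).unique hB
    have hv := hE.eq_of_nhds
    simp only [Pi.mul_apply, id] at hu hv
    have hsz := hs0 s hsU
    have hs1' : s - 1 ≠ 0 := sub_ne_zero.2 hs1
    have hEF : Complex.exp (F s) = 16 * s^2 / ((s - 1) * riemannZeta s) := by
      rw [hv]; field_simp
    rw [hEF] at hu
    field_simp at hu ⊢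
    linear_combination hu
  · intro s hs
    have hsU : s ∈ U := by rw [mem_U]; linarith
    have hs1 : s ≠ 1 := by rintro rfl; (norm_num at hs; try linarith)
    have hns : 2 ≤ ‖s‖ := hs.trans (Complex.re_le_norm s)
    rw [Real.le_log_iff_exp_le (by positivity), hre s hsU, Z_of_ne hs1, norm_mul]
    have h1 := norm_zeta_ge hs
    have h2 : ‖s‖ / 2 ≤ ‖s - 1‖ := by
      have := norm_sub_norm_le s 1
      rw [norm_one] at this
      linarith
    have h3 : 0 < ‖s - 1‖ := by linarith
    have h4 : 0 < ‖riemannZeta s‖ := by linarith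
    rw [div_le_iff₀ (mul_pos h3 h4)]
    have : ‖s‖ / 2 * (1/4) ≤ ‖s - 1‖ * ‖riemannZeta s‖ := by gcongr
    nlinarith

end PG

namespace PG
open Set MeasureTheory Topology

/-- tent function in the logarithmic scale -/
def tent (η u : ℝ) : ℝ := max 0 (η - |Real.log u|)

lemma tent_nonneg (η u : ℝ) : 0 ≤ tent η u := le_max_left _ _

lemma tent_le {η : ℝ} (hη : 0 ≤ η) (u : ℝ) : tent η u ≤ η :=
  max_le hη (by linarith [abs_nonneg (Real.log u)])

lemma tent_eq_zero {η u : ℝ} (hu : 0 < u) (h : u ≤ Real.exp (-η) ∨ Real.exp η ≤ u) :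
    tent η u = 0 := by
  apply max_eq_left
  rcases h with h | h
  · have := (Real.log_le_iff_le_exp hu).2 h
    linarith [neg_le_abs (Real.log u)]
  · have := (Real.le_log_iff_exp_le hu).2 h
    linarith [le_abs_self (Real.log u)]

lemma tent_continuousAt {η u : ℝ} (hu : 0 < u) : ContinuousAt (tent η) u := by
  unfold tent
  have := Real.continuousAt_log hu.ne'
  fun_prop

lemma measurable_tent (η : ℝ) : Measurable (tent η) := by
  unfold tent
  fun_prop

/-- complex version -/
def tentC (η : ℝ) (u : ℝ) : ℂ := (tent η u : ℂ)

/-- Mellin transform of the tent -/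
def V (η : ℝ) (s : ℂ) : ℂ := mellin (tentC η) s

lemma tentC_cont {η u : ℝ} (hu : 0 < u) : ContinuousAt (tentC η) u :=
  Complex.continuous_ofReal.continuousAt.comp (tent_continuousAt hu)

lemma integrand_cont {η u : ℝ} (s : ℂ) (hu : 0 < u) :
    ContinuousAt (fun t : ℝ => (t:ℂ) ^ (s - 1) • tentC η t) u := by
  have h2 : ContinuousAt (fun t : ℝ => (t:ℂ) ^ (s - 1)) u :=
    (Complex.continuousAt_ofReal_cpow_const _ _ (Or.inr hu.ne'))
  exact h2.smul (tentC_cont hu)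

lemma integrand_zero {η u : ℝ} (s : ℂ) (hu : u ∈ Ioi (0:ℝ) \ Ioc (Real.exp (-η)) (Real.exp η)) :
    (u:ℂ) ^ (s - 1) • tentC η u = 0 := by
  have : tent η u = 0 := by
    apply tent_eq_zero hu.1
    have h2 := hu.2
    simp only [mem_Ioc, not_and_or, not_lt, not_le] at h2
    rcases h2 with h | h
    · exact Or.inl h
    · exact Or.inr h.le
  simp [tentC, this]

lemma tent_mellinConvergent {η : ℝ} (s : ℂ) : MellinConvergent (tentC η) s := by
  unfold MellinConvergent
  apply IntegrableOn.of_forall_sdiff_eq_zero (s := Ioc (Real.exp (-η)) (Real.exp η)) _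
    measurableSet_Ioi
  · intro x hx
    exact integrand_zero s hx
  · refine IntegrableOn.mono_set (t := Icc (Real.exp (-η)) (Real.exp η)) ?_ Ioc_subset_Icc_self
    apply ContinuousOn.integrableOn_Icc
    intro u hu
    exact (integrand_cont s ((Real.exp_pos _).trans_le hu.1)).continuousWithinAt

lemma V_eq_interval {η : ℝ} (hη : 0 ≤ η) (s : ℂ) :
    V η s = ∫ u in (Real.exp (-η))..(Real.exp η), (u:ℂ) ^ (s - 1) • tentC η u := by
  unfold V mellin
  rw [intervalIntegral.integral_of_le (Real.exp_le_exp.2 (by linarith))]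
  apply setIntegral_eq_of_subset_of_forall_sdiff_eq_zero measurableSet_Ioi
  · intro u hu; exact (Real.exp_pos _).trans hu.1
  · intro u hu; exact integrand_zero s hu

lemma norm_V_le_triv {η : ℝ} (hη : 0 ≤ η) {s : ℂ} (hs : 0 ≤ s.re) :
    ‖V η s‖ ≤ 2 * η^2 * Real.exp (η * s.re) := by
  rw [V_eq_interval hη]
  have hle : Real.exp (-η) ≤ Real.exp η := Real.exp_le_exp.2 (by linarith)
  have h0 : (0:ℝ) ∉ uIcc (Real.exp (-η)) (Real.exp η) := by
    rw [uIcc_of_le hle]; intro h; exact absurd h.1 (not_le.2 (Real.exp_pos _))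
  calc _ ≤ ∫ u in (Real.exp (-η))..(Real.exp η), (η * Real.exp (η * s.re)) * u⁻¹ := by
        apply intervalIntegral.norm_integral_le_of_norm_le hle
        · refine Eventually.of_forall fun u hu => ?_
          have hu0 : 0 < u := (Real.exp_pos _).trans hu.1
          rw [norm_smul, Complex.norm_cpow_eq_rpow_re_of_pos hu0, tentC, Complex.norm_real,
            Real.norm_of_nonneg (tent_nonneg _ _), Complex.sub_re, Complex.one_re,
            Real.rpow_sub_one hu0.ne', div_eq_mul_inv]
          have h1 := tent_le hη u
          have h2 : u ^ s.re ≤ Real.exp (η * s.re) := by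
            rw [Real.exp_mul]
            exact Real.rpow_le_rpow hu0.le hu.2 hs
          have h3 : 0 < u⁻¹ := inv_pos.2 hu0
          have h4 := tent_nonneg η u
          calc _ ≤ Real.exp (η * s.re) * u⁻¹ * η := by gcongr
            _ = _ := by ring
        · apply IntervalIntegrable.const_mul
          exact intervalIntegral.intervalIntegrable_inv (fun x hx h => h0 (h ▸ hx)) continuousOn_id
    _ = _ := by
        rw [intervalIntegral.integral_const_mul, integral_inv h0, ← Real.exp_sub, Real.log_exp]
        ring

lemma V_formula {η : ℝ} (hη : 0 ≤ η) {s : ℂ} (hs : s ≠ 0) :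
    V η s = (Complex.exp (s * η) + Complex.exp (-(s * η)) - 2) / s^2 := by
  rw [V_eq_interval hη]
  have hii : ∀ a b : ℝ, 0 < a → 0 < b → IntervalIntegrable
      (fun u : ℝ => (u:ℂ) ^ (s - 1) • tentC η u) volume a b := by
    intro a b ha hb
    apply ContinuousOn.intervalIntegrable
    intro u hu
    exact (integrand_cont s ((lt_min ha hb).trans_le hu.1)).continuousWithinAt
  have hd : ∀ u : ℝ, 0 < u → HasDerivAt (fun u : ℝ => (u:ℂ) ^ s) (s * (u:ℂ) ^ (s - 1)) u := by
    intro u hu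
    have := (hasDerivAt_id (u:ℂ)).cpow_const (c := s) (Or.inl (by simpa using hu))
    simpa using this.comp_ofReal
  have hl : ∀ u : ℝ, 0 < u → HasDerivAt (fun u : ℝ => ((Real.log u : ℝ) : ℂ)) ((u⁻¹ : ℝ) : ℂ) u := by
    intro u hu
    exact (Real.hasDerivAt_log hu.ne').ofReal_comp
  have hpow : ∀ u : ℝ, 0 < u → (u:ℂ) ^ s = (u:ℂ) ^ (s - 1) * u := by
    intro u hu
    have hu' : (u:ℂ) ≠ 0 := by exact_mod_cast hu.ne'
    rw [Complex.cpow_sub _ _ hu', Complex.cpow_one]; field_simp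
  have e1 : Real.exp (-η) ≤ 1 := Real.exp_le_one_iff.2 (by linarith)
  have e2 : 1 ≤ Real.exp η := Real.one_le_exp hη
  have h1 : ∫ u in (Real.exp (-η))..1, (u:ℂ) ^ (s - 1) • tentC η u =
      ((η + ((Real.log 1 : ℝ):ℂ)) * ((1:ℝ):ℂ)^s / s - ((1:ℝ):ℂ)^s / s^2) -
      ((η + ((Real.log (Real.exp (-η)) : ℝ):ℂ)) * ((Real.exp (-η):ℝ):ℂ)^s / s
        - ((Real.exp (-η):ℝ):ℂ)^s / s^2) := by
    refine intervalIntegral.integral_eq_sub_of_hasDerivAt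
      (f := fun u : ℝ => (η + ((Real.log u : ℝ):ℂ)) * (u:ℂ)^s / s - (u:ℂ)^s / s^2) ?_
      (hii _ _ (Real.exp_pos _) one_pos)
    intro u hu
    rw [uIcc_of_le e1] at hu
    have hu0 : 0 < u := (Real.exp_pos _).trans_le hu.1
    have hu' : (u:ℂ) ≠ 0 := by exact_mod_cast hu0.ne'
    have := ((((hl u hu0).const_add (η:ℂ)).mul (hd u hu0)).div_const s).sub ((hd u hu0).div_const (s^2))
    refine this.congr_deriv ?_
    have ht : tent η u = η + Real.log u := by
      have hl0 := Real.log_nonpos hu0.le hu.2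
      have hl1 := (Real.le_log_iff_exp_le hu0).2 hu.1
      rw [tent, abs_of_nonpos hl0, max_eq_right] <;> linarith
    rw [tentC, ht, hpow u hu0, smul_eq_mul]
    push_cast
    field_simp
    ring
  have h2 : ∫ u in (1:ℝ)..(Real.exp η), (u:ℂ) ^ (s - 1) • tentC η u =
      ((η - ((Real.log (Real.exp η) : ℝ):ℂ)) * ((Real.exp η:ℝ):ℂ)^s / s
        + ((Real.exp η:ℝ):ℂ)^s / s^2) -
      ((η - ((Real.log 1 : ℝ):ℂ)) * ((1:ℝ):ℂ)^s / s + ((1:ℝ):ℂ)^s / s^2) := by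
    refine intervalIntegral.integral_eq_sub_of_hasDerivAt
      (f := fun u : ℝ => (η - ((Real.log u : ℝ):ℂ)) * (u:ℂ)^s / s + (u:ℂ)^s / s^2) ?_
      (hii _ _ one_pos (Real.exp_pos _))
    intro u hu
    rw [uIcc_of_le e2] at hu
    have hu0 : 0 < u := one_pos.trans_le hu.1
    have hu' : (u:ℂ) ≠ 0 := by exact_mod_cast hu0.ne'
    have := ((((hl u hu0).const_sub (η:ℂ)).mul (hd u hu0)).div_const s).add ((hd u hu0).div_const (s^2))
    refine this.congr_deriv ?_
    have ht : tent η u = η - Real.log u := by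
      have hl0 := Real.log_nonneg hu.1
      have hl1 := (Real.log_le_iff_le_exp hu0).2 hu.2
      rw [tent, abs_of_nonneg hl0, max_eq_right]; linarith
    rw [tentC, ht, hpow u hu0, smul_eq_mul]
    push_cast
    field_simp
    ring
  have hexp : ∀ r : ℝ, ((Real.exp r:ℝ):ℂ)^s = Complex.exp (s * r) := by
    intro r
    rw [Complex.cpow_def_of_ne_zero (by exact_mod_cast (Real.exp_pos r).ne'),
      ← Complex.ofReal_log (Real.exp_pos r).le, Real.log_exp, mul_comm]
  rw [← intervalIntegral.integral_add_adjacent_intervals (hii _ 1 (Real.exp_pos _) one_pos)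
    (hii 1 _ one_pos (Real.exp_pos _)), h1, h2, hexp, hexp, Real.log_exp, Real.log_exp, Real.log_one]
  simp only [Complex.ofReal_one, Complex.one_cpow, Complex.ofReal_zero, Complex.ofReal_neg]
  rw [mul_neg]
  field_simp
  ring

lemma norm_V_le {η : ℝ} (hη : 0 < η) (hη2 : η ≤ 1/2) {s : ℂ} (hs : 0 < s.re) (hs2 : s.re ≤ 2) :
    ‖V η s‖ ≤ 18 * ((1/η)^2 + s.im^2)⁻¹ := by
  have h1 := norm_V_le_triv hη.le hs.le
  have hs0 : s ≠ 0 := by rintro rfl; simp at hs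
  have hE : Real.exp (η * s.re) ≤ 3 := by
    have : Real.exp (η * s.re) ≤ Real.exp 1 := Real.exp_le_exp.2 (by nlinarith)
    linarith [Real.exp_one_lt_d9]
  have hE1 : 1 ≤ Real.exp (η * s.re) := Real.one_le_exp (by positivity)
  have h2 : ‖V η s‖ * ‖s‖^2 ≤ 4 * Real.exp (η * s.re) := by
    rw [V_formula hη.le hs0, norm_div, norm_pow, div_mul_cancel₀ _ (by positivity)]
    have a1 : ‖Complex.exp (s * η)‖ = Real.exp (η * s.re) := by
      rw [Complex.norm_exp]; simp [mul_comm]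
    have a2 : ‖Complex.exp (-(s * η))‖ ≤ 1 := by
      rw [Complex.norm_exp, Real.exp_le_one_iff]; simp; positivity
    have a3 : ‖(2:ℂ)‖ = 2 := by simp
    have := norm_sub_le (Complex.exp (s * η) + Complex.exp (-(s * η))) 2
    have := norm_add_le (Complex.exp (s * η)) (Complex.exp (-(s * η)))
    linarith
  have h3 : s.im^2 ≤ ‖s‖^2 := by
    rw [← Complex.normSq_eq_norm_sq, Complex.normSq_apply]; nlinarith [sq_nonneg s.re]
  rw [← div_eq_mul_inv, le_div_iff₀ (by positivity), mul_add]
  have h4 : ‖V η s‖ * s.im^2 ≤ ‖V η s‖ * ‖s‖^2 := by gcongr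
  have h5 : ‖V η s‖ * (1/η)^2 ≤ 2 * Real.exp (η * s.re) := by
    calc _ ≤ 2 * η^2 * Real.exp (η * s.re) * (1/η)^2 := by gcongr
      _ = _ := by field_simp
  linarith

end PG

namespace PG
open Set MeasureTheory Topology

lemma V_diff {η : ℝ} (hη : 0 ≤ η) {s : ℂ} (hs : 0 < s.re) : DifferentiableAt ℂ (V η) s := by
  have hs0 : s ≠ 0 := by rintro rfl; simp at hs
  have h : V η =ᶠ[𝓝 s] fun s => (Complex.exp (s * η) + Complex.exp (-(s * η)) - 2) / s^2 := by
    filter_upwards [isOpen_ne.mem_nhds hs0] with z hz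
    exact V_formula hη hz
  refine DifferentiableAt.congr_of_eventuallyEq ?_ h
  have : s^2 ≠ 0 := pow_ne_zero 2 hs0
  fun_prop (disch := assumption)

lemma V_line_cont {η : ℝ} (hη : 0 ≤ η) {σ : ℝ} (hσ : 0 < σ) :
    Continuous fun t : ℝ => V η (σ + t * Complex.I) := by
  rw [continuous_iff_continuousAt]
  intro t
  have : ContinuousAt (V η) (σ + t * Complex.I) := (V_diff hη (by simpa using hσ)).continuousAt
  exact this.comp (f := fun t : ℝ => (σ + t * Complex.I : ℂ)) (by fun_prop)

lemma V_line_integrable {η : ℝ} (hη : 0 < η) (hη2 : η ≤ 1/2) {σ : ℝ} (hσ : 0 < σ) (hσ2 : σ ≤ 2) :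
    Integrable fun t : ℝ => V η (σ + t * Complex.I) := by
  refine ((integrable_poisson (one_div_pos.2 hη)).const_mul 18).mono'
    (V_line_cont hη.le hσ).aestronglyMeasurable (Eventually.of_forall fun t => ?_)
  have := norm_V_le hη hη2 (s := σ + t * Complex.I) (by simpa using hσ) (by simpa using hσ2)
  simpa using this

lemma V_inv {η : ℝ} (hη : 0 < η) (hη2 : η ≤ 1/2) {u : ℝ} (hu : 0 < u) :
    ∫ t : ℝ, (u:ℂ) ^ (-(((2:ℝ):ℂ) + t * Complex.I)) * V η ((2:ℝ) + t * Complex.I)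
      = 2 * π * tent η u := by
  have := mellinInv_mellin_eq 2 (tentC η) hu (tent_mellinConvergent _)
    (V_line_integrable hη hη2 two_pos le_rfl) (tentC_cont hu)
  unfold mellinInv at this
  simp only [smul_eq_mul] at this
  change _ • ∫ t : ℝ, (u:ℂ) ^ (-(((2:ℝ):ℂ) + t * Complex.I)) * V η ((2:ℝ) + t * Complex.I) = _ at this
  have h2 : (2 * π : ℂ) ≠ 0 := by
    have := Real.pi_ne_zero
    simp [this]
  rw [tentC, Complex.real_smul] at this
  push_cast at this ⊢
  rw [← this, ← mul_assoc, mul_one_div_cancel h2, one_mul]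

lemma fub {α : Type*} [MeasurableSpace α] (μ : Measure α) [SFinite μ] {w φ : α → ℝ}
    (hw : Measurable w) (hφ : Measurable φ) (hpos : ∀ᵐ a ∂μ, w a ≠ 0 → 0 < φ a)
    (hint : Integrable (fun a => w a * φ a ^ (-2:ℝ)) μ)
    {η : ℝ} (hη : 0 < η) (hη2 : η ≤ 1/2) {x : ℝ} (hx : 0 < x) :
    Integrable (fun t : ℝ => (∫ a, (w a : ℂ) * (φ a : ℂ) ^ (-(((2:ℝ):ℂ) + t * Complex.I)) ∂μ) *
      ((x:ℂ) ^ (((2:ℝ):ℂ) + t * Complex.I) * V η ((2:ℝ) + t * Complex.I))) ∧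
    ∫ t : ℝ, (∫ a, (w a : ℂ) * (φ a : ℂ) ^ (-(((2:ℝ):ℂ) + t * Complex.I)) ∂μ) *
      ((x:ℂ) ^ (((2:ℝ):ℂ) + t * Complex.I) * V η ((2:ℝ) + t * Complex.I))
      = ((2 * π * ∫ a, w a * tent η (φ a / x) ∂μ : ℝ) : ℂ) := by
  have hVc := V_line_cont hη.le (two_pos (α := ℝ))
  have hVi := V_line_integrable hη hη2 two_pos le_rfl
  have hxc : Continuous fun t : ℝ => (x:ℂ) ^ (((2:ℝ):ℂ) + t * Complex.I) := by
    refine Continuous.const_cpow (by fun_prop) (Or.inl (by exact_mod_cast hx.ne'))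
  have hnx : ∀ t : ℝ, ‖(x:ℂ) ^ (((2:ℝ):ℂ) + t * Complex.I)‖ = x^(2:ℝ) := by
    intro t
    rw [Complex.norm_cpow_eq_rpow_re_of_pos hx]; simp
  have hI : Integrable (Function.uncurry fun (t : ℝ) (a : α) =>
      (w a : ℂ) * (φ a : ℂ) ^ (-(((2:ℝ):ℂ) + t * Complex.I)) *
      ((x:ℂ) ^ (((2:ℝ):ℂ) + t * Complex.I) * V η ((2:ℝ) + t * Complex.I)))
      ((volume : Measure ℝ).prod μ) := by
    have hb := (hVi.norm.const_mul (x^(2:ℝ))).mul_prod hint.norm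
    refine hb.mono' ?_ ?_
    · have hV' : Measurable fun p : ℝ × α => V η ((2:ℝ) + p.1 * Complex.I) :=
        hVc.measurable.comp measurable_fst
      have hx' : Measurable fun p : ℝ × α => (x:ℂ) ^ (((2:ℝ):ℂ) + p.1 * Complex.I) :=
        hxc.measurable.comp measurable_fst
      have hw' : Measurable fun p : ℝ × α => (w p.2 : ℂ) :=
        Complex.measurable_ofReal.comp (hw.comp measurable_snd)
      have hφ' : Measurable fun p : ℝ × α => (φ p.2 : ℂ) :=
        Complex.measurable_ofReal.comp (hφ.comp measurable_snd)
      have he : Measurable fun p : ℝ × α => (-(((2:ℝ):ℂ) + p.1 * Complex.I)) := by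
        have : Measurable fun t : ℝ => (-(((2:ℝ):ℂ) + t * Complex.I)) := by fun_prop
        exact this.comp measurable_fst
      exact ((hw'.mul (hφ'.pow he)).mul (hx'.mul hV')).aestronglyMeasurable
    · have : ∀ᵐ p : ℝ × α ∂((volume : Measure ℝ).prod μ), w p.2 ≠ 0 → 0 < φ p.2 :=
        Measure.quasiMeasurePreserving_snd.ae hpos
      filter_upwards [this] with p hp
      simp only [Function.uncurry]
      by_cases h0 : w p.2 = 0
      · simp [h0]
      · have hp0 := hp h0
        have : (-(((2:ℝ):ℂ) + p.1 * Complex.I)).re = -2 := by simp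
        rw [norm_mul, norm_mul, norm_mul, hnx, Complex.norm_cpow_eq_rpow_re_of_pos hp0, this,
          Complex.norm_real, norm_mul, Real.norm_of_nonneg (Real.rpow_nonneg hp0.le _)]
        apply le_of_eq; ring
  refine ⟨?_, ?_⟩
  · refine hI.integral_prod_left.congr (Eventually.of_forall fun t => ?_)
    simp only [Function.uncurry]
    rw [integral_mul_const]
  · have h1 := integral_integral_swap hI
    have h2 : ∀ t : ℝ, ∫ a, (w a : ℂ) * (φ a : ℂ) ^ (-(((2:ℝ):ℂ) + t * Complex.I)) *
      ((x:ℂ) ^ (((2:ℝ):ℂ) + t * Complex.I) * V η ((2:ℝ) + t * Complex.I)) ∂μ =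
      (∫ a, (w a : ℂ) * (φ a : ℂ) ^ (-(((2:ℝ):ℂ) + t * Complex.I)) ∂μ) *
      ((x:ℂ) ^ (((2:ℝ):ℂ) + t * Complex.I) * V η ((2:ℝ) + t * Complex.I)) :=
      fun t => integral_mul_const _ _
    simp_rw [h2] at h1
    rw [h1, ← integral_const_mul, ← integral_complex_ofReal]
    apply integral_congr_ae
    filter_upwards [hpos] with a ha
    by_cases h0 : w a = 0
    · simp [h0]
    have ha0 := ha h0
    have h3 := V_inv hη hη2 (div_pos ha0 hx)
    have h4 : ∀ t : ℝ, (w a : ℂ) * (φ a : ℂ) ^ (-(((2:ℝ):ℂ) + t * Complex.I)) *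
      ((x:ℂ) ^ (((2:ℝ):ℂ) + t * Complex.I) * V η ((2:ℝ) + t * Complex.I)) =
      w a * (((φ a / x : ℝ):ℂ) ^ (-(((2:ℝ):ℂ) + t * Complex.I)) * V η ((2:ℝ) + t * Complex.I)) := by
      intro t
      have : ((φ a / x : ℝ):ℂ) ^ (-(((2:ℝ):ℂ) + t * Complex.I)) =
          (φ a : ℂ) ^ (-(((2:ℝ):ℂ) + t * Complex.I)) * (x:ℂ) ^ (((2:ℝ):ℂ) + t * Complex.I) := by
        rw [div_eq_mul_inv, Complex.ofReal_mul, Complex.mul_cpow_ofReal_nonneg ha0.le (inv_pos.2 hx).le,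
          Complex.ofReal_inv, Complex.inv_cpow _ _ (by
            rw [Complex.arg_ofReal_of_nonneg hx.le]; exact Real.pi_pos.ne),
          Complex.cpow_neg (x:ℂ), inv_inv]
      rw [this]; ring
    simp_rw [h4]
    rw [integral_const_mul, h3]
    push_cast
    ring

end PG

namespace PG
open Set MeasureTheory Topology

lemma count_int {E : Type*} [NormedAddCommGroup E] [NormedSpace ℝ E] [CompleteSpace E] {f : ℕ → E}
    (hf : Summable fun n => ‖f n‖) : ∫ n, f n ∂Measure.count = ∑' n, f n := by
  rw [integral_countable (integrable_count_iff.2 hf)]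
  simp [measureReal_def]

lemma formula_primes {η : ℝ} (hη : 0 < η) (hη2 : η ≤ 1/2) {x : ℝ} (hx : 0 < x) :
    Integrable (fun t : ℝ =>
      (LSeries (fun n => (ArithmeticFunction.vonMangoldt n : ℂ)) (((2:ℝ):ℂ) + t * Complex.I)) *
      ((x:ℂ) ^ (((2:ℝ):ℂ) + t * Complex.I) * V η ((2:ℝ) + t * Complex.I))) ∧
    ∫ t : ℝ, (LSeries (fun n => (ArithmeticFunction.vonMangoldt n : ℂ)) (((2:ℝ):ℂ) + t * Complex.I)) *
      ((x:ℂ) ^ (((2:ℝ):ℂ) + t * Complex.I) * V η ((2:ℝ) + t * Complex.I))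
      = ((2 * π * ∫ n : ℕ, ArithmeticFunction.vonMangoldt n * tent η (n / x) ∂Measure.count : ℝ) : ℂ) := by
  have hterm : ∀ (s : ℂ) (n : ℕ), LSeries.term (fun n => (ArithmeticFunction.vonMangoldt n : ℂ)) s n
      = (ArithmeticFunction.vonMangoldt n : ℂ) * (((n:ℝ)):ℂ) ^ (-s) := by
    intro s n
    rw [LSeries.term_def]
    split_ifs with h
    · simp [h]
    · rw [Complex.cpow_neg, div_eq_mul_inv]; simp
  have hsum : ∀ s : ℂ, 1 < s.re → Summable fun n : ℕ =>
      ‖(ArithmeticFunction.vonMangoldt n : ℂ) * (((n:ℝ)):ℂ) ^ (-s)‖ := by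
    intro s hs
    have := (ArithmeticFunction.LSeriesSummable_vonMangoldt hs).norm
    simpa only [hterm] using this
  have hD : ∀ s : ℂ, 1 < s.re → LSeries (fun n => (ArithmeticFunction.vonMangoldt n : ℂ)) s =
      ∫ n : ℕ, (ArithmeticFunction.vonMangoldt n : ℂ) * (((n:ℝ)):ℂ) ^ (-s) ∂Measure.count := by
    intro s hs
    rw [count_int (hsum s hs), LSeries]
    simp only [hterm]
  have := fub (Measure.count : Measure ℕ) (w := fun n => ArithmeticFunction.vonMangoldt n)
    (φ := fun n => (n:ℝ)) (measurable_of_countable _) (measurable_of_countable _) ?_ ?_ hη hη2 hx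
  · have hre : ∀ t : ℝ, 1 < (((2:ℝ):ℂ) + t * Complex.I).re := by intro t; simp
    simp_rw [fun t : ℝ => hD _ (hre t)]
    exact this
  · refine Eventually.of_forall fun n h => ?_
    rcases Nat.eq_zero_or_pos n with h0 | h0
    · simp [h0] at h
    · exact_mod_cast h0
  · rw [integrable_count_iff]
    refine (hsum 2 (by simp)).congr fun n => ?_
    rcases Nat.eq_zero_or_pos n with h0 | h0
    · simp [h0]
    · have h0' : (0:ℝ) < n := by exact_mod_cast h0
      rw [norm_mul, norm_mul, Complex.norm_real, Complex.norm_cpow_eq_rpow_re_of_pos h0',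
        Real.norm_of_nonneg (Real.rpow_nonneg h0'.le _)]
      simp

lemma formula_J2 {η : ℝ} (hη : 0 < η) (hη2 : η ≤ 1/2) {x : ℝ} (hx : 0 < x) :
    Integrable (fun t : ℝ => (1 / ((((2:ℝ):ℂ) + t * Complex.I) - 1)) *
      ((x:ℂ) ^ (((2:ℝ):ℂ) + t * Complex.I) * V η ((2:ℝ) + t * Complex.I))) ∧
    ∫ t : ℝ, (1 / ((((2:ℝ):ℂ) + t * Complex.I) - 1)) *
      ((x:ℂ) ^ (((2:ℝ):ℂ) + t * Complex.I) * V η ((2:ℝ) + t * Complex.I))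
      = ((2 * π * ∫ y in Ioi (1:ℝ), tent η (y / x) : ℝ) : ℂ) := by
  have hD : ∀ t : ℝ, (1 / ((((2:ℝ):ℂ) + t * Complex.I) - 1)) =
      ∫ y in Ioi (1:ℝ), ((1:ℝ):ℂ) * (y:ℂ) ^ (-(((2:ℝ):ℂ) + t * Complex.I)) := by
    intro t
    simp only [Complex.ofReal_one, one_mul]
    rw [integral_Ioi_cpow_of_lt (by simp) one_pos]
    simp only [Complex.ofReal_one, Complex.one_cpow]
    rw [neg_add_eq_sub, ← neg_sub _ (1:ℂ), div_neg, neg_div, neg_neg]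
  have := fub (volume.restrict (Ioi (1:ℝ))) (w := fun _ => 1) (φ := fun y => y) measurable_const
    measurable_id ?_ ?_ hη hη2 hx
  · simp_rw [hD]
    simpa only [one_mul] using this
  · exact ae_restrict_of_forall_mem measurableSet_Ioi fun y hy _ => one_pos.trans hy
  · simp only [one_mul]
    exact integrableOn_Ioi_rpow_of_lt (by norm_num) one_pos

lemma formula_J3 {η : ℝ} (hη : 0 < η) (hη2 : η ≤ 1/2) {x : ℝ} (hx : 0 < x) :
    Integrable (fun t : ℝ => (1 / (((2:ℝ):ℂ) + t * Complex.I)) *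
      ((x:ℂ) ^ (((2:ℝ):ℂ) + t * Complex.I) * V η ((2:ℝ) + t * Complex.I))) ∧
    ∫ t : ℝ, (1 / (((2:ℝ):ℂ) + t * Complex.I)) *
      ((x:ℂ) ^ (((2:ℝ):ℂ) + t * Complex.I) * V η ((2:ℝ) + t * Complex.I))
      = ((2 * π * ∫ y in Ioi (1:ℝ), y⁻¹ * tent η (y / x) : ℝ) : ℂ) := by
  have hD : ∀ t : ℝ, (1 / (((2:ℝ):ℂ) + t * Complex.I)) =
      ∫ y in Ioi (1:ℝ), ((y⁻¹:ℝ):ℂ) * (y:ℂ) ^ (-(((2:ℝ):ℂ) + t * Complex.I)) := by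
    intro t
    have : ∫ y in Ioi (1:ℝ), ((y⁻¹:ℝ):ℂ) * (y:ℂ) ^ (-(((2:ℝ):ℂ) + t * Complex.I)) =
        ∫ y in Ioi (1:ℝ), (y:ℂ) ^ (-(((2:ℝ):ℂ) + t * Complex.I) - 1) := by
      apply setIntegral_congr_fun measurableSet_Ioi
      intro y hy
      have hy0 : (y:ℂ) ≠ 0 := by exact_mod_cast (one_pos.trans hy).ne'
      simp only
      rw [Complex.cpow_sub _ _ hy0, Complex.cpow_one, Complex.ofReal_inv]; field_simp
    rw [this, integral_Ioi_cpow_of_lt (by simp; norm_num) one_pos]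
    simp only [Complex.ofReal_one, Complex.one_cpow]
    rw [sub_add_cancel, div_neg, neg_div, neg_neg]
  have := fub (volume.restrict (Ioi (1:ℝ))) (w := fun y => y⁻¹) (φ := fun y => y) measurable_inv
    measurable_id ?_ ?_ hη hη2 hx
  · simp_rw [hD]
    exact this
  · exact ae_restrict_of_forall_mem measurableSet_Ioi fun y hy _ => one_pos.trans hy
  · have h3 : IntegrableOn (fun y : ℝ => y ^ (-3:ℝ)) (Ioi 1) :=
      integrableOn_Ioi_rpow_of_lt (by norm_num) one_pos
    refine h3.congr_fun (fun y hy => ?_) measurableSet_Ioi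
    have hy0 : 0 < y := one_pos.trans hy
    simp only
    rw [← Real.rpow_neg_one, ← Real.rpow_add hy0]; norm_num

lemma int_lin {f g h : ℝ → ℂ} (hf : Integrable f) (hg : Integrable g) (hh : Integrable h) :
    ∫ t, (2 * f t - g t + h t) = 2 * (∫ t, f t) - (∫ t, g t) + ∫ t, h t := by
  have h2 : Integrable fun t => 2 * f t := hf.const_mul 2
  have h3 : Integrable fun t => 2 * f t - g t := h2.sub hg
  rw [integral_add h3 hh, integral_sub h2 hg, integral_const_mul]

lemma explicit {F : ℂ → ℂ} (hd : ∀ s : ℂ, 1 < s.re → deriv F s = 2/s - 1/(s-1) +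
      LSeries (fun n => (ArithmeticFunction.vonMangoldt n : ℂ)) s)
    {η : ℝ} (hη : 0 < η) (hη2 : η ≤ 1/2) {x : ℝ} (hx : 0 < x) :
    ∫ t : ℝ, deriv F (((2:ℝ):ℂ) + t * Complex.I) *
      ((x:ℂ) ^ (((2:ℝ):ℂ) + t * Complex.I) * V η ((2:ℝ) + t * Complex.I)) =
    ((2 * π * (2 * (∫ y in Ioi (1:ℝ), y⁻¹ * tent η (y / x)) - (∫ y in Ioi (1:ℝ), tent η (y / x)) +
      ∫ n : ℕ, ArithmeticFunction.vonMangoldt n * tent η (n / x) ∂Measure.count) : ℝ) : ℂ) := by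
  obtain ⟨i1, e1⟩ := formula_primes hη hη2 hx
  obtain ⟨i2, e2⟩ := formula_J2 hη hη2 hx
  obtain ⟨i3, e3⟩ := formula_J3 hη hη2 hx
  have hre : ∀ t : ℝ, 1 < (((2:ℝ):ℂ) + t * Complex.I).re := by intro t; simp
  have hh : ∀ t : ℝ, deriv F (((2:ℝ):ℂ) + t * Complex.I) *
      ((x:ℂ) ^ (((2:ℝ):ℂ) + t * Complex.I) * V η ((2:ℝ) + t * Complex.I)) =
      (2 * ((1 / (((2:ℝ):ℂ) + t * Complex.I)) *
      ((x:ℂ) ^ (((2:ℝ):ℂ) + t * Complex.I) * V η ((2:ℝ) + t * Complex.I))) -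
      (1 / ((((2:ℝ):ℂ) + t * Complex.I) - 1)) *
      ((x:ℂ) ^ (((2:ℝ):ℂ) + t * Complex.I) * V η ((2:ℝ) + t * Complex.I))) +
      (LSeries (fun n => (ArithmeticFunction.vonMangoldt n : ℂ)) (((2:ℝ):ℂ) + t * Complex.I)) *
      ((x:ℂ) ^ (((2:ℝ):ℂ) + t * Complex.I) * V η ((2:ℝ) + t * Complex.I)) := by
    intro t
    rw [hd _ (hre t)]; ring
  simp_rw [hh]
  refine (int_lin i3 i2 i1).trans ?_
  rw [e1, e2, e3]
  push_cast
  ring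

end PG

namespace PG
open Set MeasureTheory Topology

lemma log_growth (t : ℝ) : Real.log (128 * ‖((2:ℝ):ℂ) + t * Complex.I‖) ≤
    32 * (1 + t^2) ^ ((1/4):ℝ) := by
  have hp : 0 < 1 + t^2 := by positivity
  have h1 : ‖((2:ℝ):ℂ) + t * Complex.I‖ ≤ 2 * (1 + t^2) ^ ((1/2):ℝ) := by
    rw [Complex.norm_add_mul_I, ← Real.sqrt_eq_rpow]
    rw [Real.sqrt_le_left (by positivity), mul_pow, Real.sq_sqrt hp.le]
    nlinarith [sq_nonneg t]
  have h0 : 0 < ‖((2:ℝ):ℂ) + t * Complex.I‖ := by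
    rw [Complex.norm_add_mul_I]; positivity
  calc _ ≤ Real.log (256 * (1 + t^2) ^ ((1/2):ℝ)) :=
        Real.log_le_log (by positivity) (by linarith)
    _ ≤ (256 * (1 + t^2) ^ ((1/2):ℝ)) ^ ((1/2):ℝ) / (1/2) :=
        Real.log_le_rpow_div (by positivity) (by norm_num)
    _ = _ := by
        rw [Real.mul_rpow (by norm_num) (by positivity), ← Real.rpow_mul hp.le]
        have : (256:ℝ) ^ ((1/2):ℝ) = 16 := by
          rw [← Real.sqrt_eq_rpow, show (256:ℝ) = 16^2 by norm_num, Real.sqrt_sq (by norm_num)]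
        rw [this]
        norm_num
        ring

lemma growth {F : ℂ → ℂ} (hF : DifferentiableOn ℂ F U) (hpos : ∀ s ∈ U, 0 < (F s).re)
    (hlog : ∀ s : ℂ, 2 ≤ s.re → (F s).re ≤ Real.log (128 * ‖s‖)) {a : ℝ} (ha : 1/2 < a) :
    ∃ K : ℝ, 0 ≤ K ∧ ∀ s : ℂ, a ≤ s.re → s.re ≤ 2 → (F s).re ≤ K * (1 + s.im^2) ^ ((1/4):ℝ) := by
  have hd : 0 < a - 1/2 := by linarith
  refine ⟨(1 + 4 / (a - 1/2)) * 32, by positivity, fun s hs hs2 => ?_⟩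
  set c : ℂ := ((2:ℝ):ℂ) + s.im * Complex.I with hc
  have hcre : c.re = 2 := by simp [hc]
  have hFc : (F c).re ≤ 32 * (1 + s.im^2) ^ ((1/4):ℝ) :=
    (hlog c hcre.ge).trans (log_growth s.im)
  have hsub : Metric.ball c (3/2) ⊆ U := ball_sub_U (by rw [hcre]; norm_num)
  have hnorm : ‖s - c‖ = 2 - s.re := by
    have : s - c = ((s.re - 2 : ℝ) : ℂ) := by
      apply Complex.ext <;> simp [hc]
    rw [this, Complex.norm_real, Real.norm_eq_abs, abs_of_nonpos (by linarith)]; ring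
  have hcU : c ∈ U := by rw [mem_U, hcre]; norm_num
  have hc0 := hpos c hcU
  have hb := ball_bound (c := c) (R := 3/2) (by norm_num) (hF.mono hsub) (fun z hz => hpos z (hsub hz))
    (z := s) (by rw [Metric.mem_ball, dist_eq_norm, hnorm]; linarith)
  rw [hnorm] at hb
  have h2 : 2 * (F c).re * (2 - s.re) / (3/2 - (2 - s.re)) ≤ (F c).re * (4 / (a - 1/2)) := by
    rw [mul_div_assoc', div_le_div_iff₀ (by linarith) hd]
    have : (2 - s.re) * (a - 1/2) ≤ 2 * (s.re - 1/2) := by nlinarith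
    nlinarith
  have h3 : (F s).re - (F c).re ≤ ‖F s - F c‖ := by
    rw [← Complex.sub_re]; exact Complex.re_le_norm _
  calc (F s).re ≤ (1 + 4 / (a - 1/2)) * (F c).re := by nlinarith
    _ ≤ (1 + 4 / (a - 1/2)) * (32 * (1 + s.im^2) ^ ((1/4):ℝ)) := by gcongr
    _ = _ := by ring

lemma diff_deriv {F : ℂ → ℂ} (hF : DifferentiableOn ℂ F U) {s : ℂ} (hs : s ∈ U) :
    DifferentiableAt ℂ (deriv F) s :=
  (hF.deriv isOpen_U).differentiableAt (isOpen_U.mem_nhds hs)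

lemma poisson_full {F : ℂ → ℂ} (hF : DifferentiableOn ℂ F U) (hpos : ∀ s ∈ U, 0 < (F s).re)
    (hlog : ∀ s : ℂ, 2 ≤ s.re → (F s).re ≤ Real.log (128 * ‖s‖)) {a y : ℝ} (ha : 1/2 < a)
    (ha2 : a ≤ 2) (hy : 1 ≤ y) :
    Integrable (fun t : ℝ => (F (a + t * Complex.I)).re * (y^2 + t^2)⁻¹) ∧
    ∫ t : ℝ, (F (a + t * Complex.I)).re * (y^2 + t^2)⁻¹ ≤ π / y * (F (a + y)).re := by
  obtain ⟨K, hK0, hK⟩ := growth hF hpos hlog ha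
  have hlU : ∀ t : ℝ, (a + t * Complex.I : ℂ) ∈ U := by
    intro t; rw [mem_U]; simpa using ha
  have hcF : Continuous fun t : ℝ => F (a + t * Complex.I) := by
    rw [continuous_iff_continuousAt]
    intro t
    exact ((hF.differentiableAt (isOpen_U.mem_nhds (hlU t))).continuousAt).comp
      (f := fun t : ℝ => (a + t * Complex.I : ℂ)) (by fun_prop)
  have hI : Integrable (fun t : ℝ => (F (a + t * Complex.I)).re * (y^2 + t^2)⁻¹) := by
    refine (integrable_dec.const_mul K).mono' ?_ (Eventually.of_forall fun t => ?_)
    · apply Continuous.aestronglyMeasurable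
      refine (Complex.continuous_re.comp hcF).mul (Continuous.inv₀ (by fun_prop) fun t => ?_)
      positivity
    · have h0 := hpos _ (hlU t)
      have h1 := hK (a + t * Complex.I) (by simp) (by simpa using ha2)
      have him : (a + t * Complex.I : ℂ).im = t := by simp
      rw [him] at h1
      have hp : 0 < 1 + t^2 := by positivity
      have h2 : (y^2 + t^2)⁻¹ ≤ (1 + t^2)⁻¹ := by
        apply inv_anti₀ hp; nlinarith
      have h3 : (0:ℝ) ≤ (y^2 + t^2)⁻¹ := by positivity
      rw [Real.norm_of_nonneg (mul_nonneg h0.le h3)]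
      calc _ ≤ K * (1 + t^2) ^ ((1/4):ℝ) * (1 + t^2)⁻¹ := by gcongr
        _ = _ := by
          rw [mul_assoc, ← Real.rpow_neg_one (1 + t^2), ← Real.rpow_add hp]; norm_num
  refine ⟨hI, ?_⟩
  have ht := intervalIntegral_tendsto_integral hI tendsto_neg_atTop_atBot tendsto_id
  refine le_of_tendsto ht ?_
  filter_upwards [eventually_ge_atTop 0] with T hT
  exact poisson_ineq hF hpos ha (by linarith) T hT

lemma error_bound {F : ℂ → ℂ} (hF : DifferentiableOn ℂ F U) (hpos : ∀ s ∈ U, 0 < (F s).re)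
    (hlog : ∀ s : ℂ, 2 ≤ s.re → (F s).re ≤ Real.log (128 * ‖s‖)) {a η x : ℝ} (ha : 1/2 < a)
    (ha2 : a ≤ 2) (hη : 0 < η) (hη2 : η ≤ 1/2) (hx : 1 ≤ x) :
    ‖∫ t : ℝ, deriv F (((2:ℝ):ℂ) + t * Complex.I) *
      ((x:ℂ) ^ (((2:ℝ):ℂ) + t * Complex.I) * V η ((2:ℝ) + t * Complex.I))‖ ≤
    72 * x^a / (a - 1/2) * (π * η * Real.log (128 * (a + 1/η))) := by
  have hd : 0 < a - 1/2 := by linarith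
  have hx0 : 0 < x := by linarith
  have hy2 : 2 ≤ 1/η := by rw [le_div_iff₀ hη]; linarith
  obtain ⟨K, hK0, hK⟩ := growth hF hpos hlog ha
  have hsU : ∀ s : ℂ, a ≤ s.re → s ∈ U := fun s hs => by rw [mem_U]; linarith
  have hder : ∀ s : ℂ, a ≤ s.re → ‖deriv F s‖ ≤ 4 * (F s).re / (a - 1/2) := by
    intro s hs
    refine (deriv_bound hF hpos (hsU s hs)).trans ?_
    have := hpos s (hsU s hs)
    gcongr
  have hxn : ∀ s : ℂ, ‖(x:ℂ)^s‖ = x ^ s.re := fun s => Complex.norm_cpow_eq_rpow_re_of_pos hx0 s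
  have hshift := strip_shift (G := fun s => deriv F s * ((x:ℂ) ^ s * V η s)) (a := a) (b := 2)
    (K := 4 * K / (a - 1/2) * (x^(2:ℝ) * 18)) ha2 ?_ ?_
  · rw [← hshift]
    obtain ⟨hI, hP⟩ := poisson_full hF hpos hlog ha ha2 (y := 1/η) (by linarith)
    calc _ ≤ ∫ t : ℝ, 72 * x^a / (a - 1/2) * ((F (a + t * Complex.I)).re * ((1/η)^2 + t^2)⁻¹) := by
          apply norm_integral_le_of_norm_le (hI.const_mul _)
          refine Eventually.of_forall fun t => ?_
          have hre : (a + t * Complex.I : ℂ).re = a := by simp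
          have him : (a + t * Complex.I : ℂ).im = t := by simp
          have h1 := hder (a + t * Complex.I) hre.ge
          have h2 := norm_V_le hη hη2 (s := a + t * Complex.I) (by rw [hre]; linarith) (by rw [hre]; exact ha2)
          rw [him] at h2
          have h0 := hpos _ (hsU (a + t * Complex.I) hre.ge)
          rw [norm_mul, norm_mul, hxn, hre]
          calc _ ≤ 4 * (F (a + t * Complex.I)).re / (a - 1/2) * (x^a * (18 * ((1/η)^2 + t^2)⁻¹)) := by
                gcongr
            _ = _ := by ring
      _ = 72 * x^a / (a - 1/2) * ∫ t : ℝ, ((F (a + t * Complex.I)).re * ((1/η)^2 + t^2)⁻¹) :=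
          integral_const_mul _ _
      _ ≤ 72 * x^a / (a - 1/2) * (π / (1/η) * (F (a + (1/η:ℝ))).re) := by gcongr
      _ ≤ _ := by
          have h3 := hlog (a + (1/η:ℝ)) (by simp only [Complex.add_re, Complex.ofReal_re]; linarith)
          have h4 : ‖(a + (1/η:ℝ) : ℂ)‖ = a + 1/η := by
            rw [← Complex.ofReal_add, Complex.norm_real, Real.norm_of_nonneg]; linarith
          rw [h4] at h3
          have : π / (1/η) = π * η := by field_simp
          rw [this]
          gcongr
  · intro s hs
    have h1 := diff_deriv hF (hsU s hs)
    have h2 := V_diff hη.le (s := s) (by linarith)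
    have h3 : DifferentiableAt ℂ (fun s => (x:ℂ)^s) s :=
      differentiableAt_id.const_cpow (Or.inl (by exact_mod_cast hx0.ne'))
    exact h1.mul (h3.mul h2)
  · intro s hs hs2
    have h0 := hpos s (hsU s hs)
    have h1 := hder s hs
    have h2 := norm_V_le hη hη2 (s := s) (by linarith) hs2
    have h3 := hK s hs hs2
    have hp : 0 < 1 + s.im^2 := by positivity
    have h4 : ((1/η)^2 + s.im^2)⁻¹ ≤ (1 + s.im^2)⁻¹ := by
      apply inv_anti₀ hp; nlinarith
    have h5 : x ^ s.re ≤ x ^ (2:ℝ) := Real.rpow_le_rpow_of_exponent_le hx hs2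
    have h6 : ‖V η s‖ ≤ 18 * (1 + s.im^2)⁻¹ := h2.trans (by gcongr)
    rw [norm_mul, norm_mul, hxn]
    calc _ ≤ 4 * (K * (1 + s.im^2) ^ ((1/4):ℝ)) / (a - 1/2) * (x^(2:ℝ) * (18 * (1 + s.im^2)⁻¹)) := by
          have : ‖deriv F s‖ ≤ 4 * (K * (1 + s.im^2) ^ ((1/4):ℝ)) / (a - 1/2) := h1.trans (by gcongr)
          gcongr
      _ = 4 * K / (a - 1/2) * (x^(2:ℝ) * 18) * ((1 + s.im^2) ^ ((1/4):ℝ) * (1 + s.im^2)⁻¹) := by ring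
      _ = _ := by
          rw [← Real.rpow_neg_one (1 + s.im^2), ← Real.rpow_add hp]; norm_num

end PG

namespace PG
open Set MeasureTheory Topology

lemma tent_int {η x : ℝ} (hx : 0 < x) {g : ℝ → ℝ} (hg : ∀ y, 0 < y → ContinuousAt g y) :
    IntegrableOn (fun y => g y * tent η (y / x)) (Ioi 1) := by
  apply IntegrableOn.of_forall_sdiff_eq_zero (s := Ioc 1 (x * Real.exp η)) _ measurableSet_Ioi
  · intro y hy
    have h1 : 1 < y := hy.1
    have h2 : x * Real.exp η < y := by
      by_contra h
      exact hy.2 ⟨h1, not_lt.1 h⟩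
    rw [tent_eq_zero (div_pos (by linarith) hx) (Or.inr (by rw [le_div_iff₀ hx]; linarith)), mul_zero]
  · refine IntegrableOn.mono_set (t := Icc 1 (x * Real.exp η)) ?_ Ioc_subset_Icc_self
    apply ContinuousOn.integrableOn_Icc
    intro y hy
    have hy0 : 0 < y := one_pos.trans_le hy.1
    have h3 : ContinuousAt (fun y => tent η (y / x)) y :=
      (tent_continuousAt (div_pos hy0 hx)).comp (f := fun y => y / x) (by fun_prop)
    exact ((hg y hy0).mul h3).continuousWithinAt

lemma J2_ge {η x : ℝ} (hη : 0 < η) (hx : 1 ≤ x) :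
    x * η^2 / 4 ≤ ∫ y in Ioi (1:ℝ), tent η (y / x) := by
  have hx0 : 0 < x := by linarith
  have hI : IntegrableOn (fun y => tent η (y / x)) (Ioi 1) := by
    simpa using tent_int (η := η) hx0 (g := fun _ => 1) (fun _ _ => continuousAt_const)
  have hle : x ≤ x * Real.exp (η/2) := le_mul_of_one_le_right hx0.le (Real.one_le_exp (by linarith))
  calc x * η^2 / 4 ≤ (x * Real.exp (η/2) - x) * (η/2) := by
        have := Real.add_one_le_exp (η/2)
        nlinarith [mul_le_mul_of_nonneg_left this (mul_pos hx0 hη).le]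
    _ = ∫ y in Ioc x (x * Real.exp (η/2)), η/2 := by
        rw [setIntegral_const, measureReal_def, Real.volume_Ioc,
          ENNReal.toReal_ofReal (by linarith), smul_eq_mul]
    _ ≤ ∫ y in Ioc x (x * Real.exp (η/2)), tent η (y / x) := by
        apply setIntegral_mono_on (by simp) _ measurableSet_Ioc
        · intro y hy
          have hy0 : 0 < y := hx0.trans hy.1
          have h1 : 0 ≤ Real.log (y / x) := Real.log_nonneg (by rw [le_div_iff₀ hx0]; linarith [hy.1])
          have h2 : Real.log (y / x) ≤ η/2 := by
            rw [Real.log_le_iff_le_exp (div_pos hy0 hx0), div_le_iff₀ hx0]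
            linarith [hy.2]
          rw [tent, abs_of_nonneg h1]
          exact le_max_of_le_right (by linarith)
        · exact hI.mono_set fun y hy => lt_of_le_of_lt hx hy.1
    _ ≤ _ := by
        apply setIntegral_mono_set hI
        · exact Eventually.of_forall fun y => tent_nonneg _ _
        · have hsub : Ioc x (x * Real.exp (η/2)) ⊆ Ioi 1 := fun y hy => lt_of_le_of_lt hx hy.1
          exact hsub.eventuallyLE

lemma J3_le {η x : ℝ} (hη : 0 < η) (hx : 1 ≤ x) :
    ∫ y in Ioi (1:ℝ), y⁻¹ * tent η (y / x) ≤ η * (Real.log x + η) := by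
  have hx0 : 0 < x := by linarith
  have hI : IntegrableOn (fun y => y⁻¹ * tent η (y / x)) (Ioi 1) :=
    tent_int hx0 (g := fun y => y⁻¹) (fun y hy => continuousAt_inv₀ hy.ne')
  have h1 : 1 ≤ x * Real.exp η := by nlinarith [Real.one_le_exp hη.le]
  have e : ∫ y in Ioi (1:ℝ), y⁻¹ * tent η (y / x) =
      ∫ y in Ioc 1 (x * Real.exp η), y⁻¹ * tent η (y / x) := by
    apply setIntegral_eq_of_subset_of_forall_sdiff_eq_zero measurableSet_Ioi
    · intro u hu; exact hu.1
    · intro y hy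
      have h1 : 1 < y := hy.1
      have h2 : x * Real.exp η < y := by
        by_contra h
        exact hy.2 ⟨h1, not_lt.1 h⟩
      rw [tent_eq_zero (div_pos (by linarith) hx0) (Or.inr (by rw [le_div_iff₀ hx0]; linarith)), mul_zero]
  have h0 : (0:ℝ) ∉ uIcc 1 (x * Real.exp η) := by
    rw [uIcc_of_le h1]; intro h; linarith [h.1]
  have hii : IntervalIntegrable (fun y : ℝ => y⁻¹ * η) volume 1 (x * Real.exp η) := by
    apply IntervalIntegrable.mul_const
    exact intervalIntegral.intervalIntegrable_inv (fun x hx h => h0 (h ▸ hx)) continuousOn_id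
  rw [e]
  calc _ ≤ ∫ y in Ioc 1 (x * Real.exp η), y⁻¹ * η := by
        apply setIntegral_mono_on (hI.mono_set fun y hy => hy.1) hii.1 measurableSet_Ioc
        intro y hy
        have : 0 < y := one_pos.trans hy.1
        have := tent_le hη.le (y / x)
        gcongr
    _ = ∫ y in (1:ℝ)..(x * Real.exp η), y⁻¹ * η := (intervalIntegral.integral_of_le h1).symm
    _ = _ := by
        rw [intervalIntegral.integral_mul_const, integral_inv h0, div_one,
          Real.log_mul hx0.ne' (Real.exp_pos _).ne', Real.log_exp, mul_comm]

lemma S_le {C : ℝ} (hC : ∀ x, Chebyshev.psi x - Chebyshev.theta x ≤ C * Real.sqrt x)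
    {η x : ℝ} (hη : 0 < η) (hx : 0 < x)
    (hno : ∀ p : ℕ, p.Prime → x * Real.exp (-η) < p → (p:ℝ) < x * Real.exp η → False) :
    ∫ n : ℕ, ArithmeticFunction.vonMangoldt n * tent η (n / x) ∂Measure.count ≤
      η * (C * Real.sqrt (x * Real.exp η)) := by
  have hz : ∀ n : ℕ, n ∉ (Finset.Ioc 0 ⌊x * Real.exp η⌋₊).filter (fun n => ¬ n.Prime) →
      ArithmeticFunction.vonMangoldt n * tent η (n / x) = 0 := by
    intro n hn
    rcases Nat.eq_zero_or_pos n with h0 | h0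
    · simp [h0]
    have hn0 : (0:ℝ) < n := by exact_mod_cast h0
    have hlarge : x * Real.exp η ≤ n → tent η (n / x) = 0 := fun h =>
      tent_eq_zero (div_pos hn0 hx) (Or.inr (by rw [le_div_iff₀ hx]; linarith))
    have hsmall : n ≤ x * Real.exp (-η) → tent η (n / x) = 0 := fun h =>
      tent_eq_zero (div_pos hn0 hx) (Or.inl (by rw [div_le_iff₀ hx]; linarith))
    have : tent η (n / x) = 0 := by
      by_cases h1 : x * Real.exp η ≤ n
      · exact hlarge h1
      by_cases h2 : (n:ℝ) ≤ x * Real.exp (-η)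
      · exact hsmall h2
      push Not at h1 h2
      exfalso
      by_cases hp : n.Prime
      · exact hno n hp h2 h1
      · apply hn
        simp only [Finset.mem_filter, Finset.mem_Ioc]
        exact ⟨⟨h0, Nat.le_floor h1.le⟩, hp⟩
    rw [this, mul_zero]
  rw [count_int]
  · rw [tsum_eq_sum (s := (Finset.Ioc 0 ⌊x * Real.exp η⌋₊).filter (fun n => ¬ n.Prime)) (fun n hn => hz n hn)]
    calc _ ≤ ∑ n ∈ (Finset.Ioc 0 ⌊x * Real.exp η⌋₊).filter (fun n => ¬ n.Prime),
          ArithmeticFunction.vonMangoldt n * η := by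
          apply Finset.sum_le_sum
          intro n _
          have := tent_le hη.le (n / x)
          have := @ArithmeticFunction.vonMangoldt_nonneg n
          gcongr
      _ = η * (Chebyshev.psi (x * Real.exp η) - Chebyshev.theta (x * Real.exp η)) := by
          rw [Chebyshev.psi_sub_theta_eq_sum_not_prime, ← Finset.sum_mul, mul_comm]
      _ ≤ _ := by gcongr; exact hC _
  · apply summable_of_ne_finset_zero (s := (Finset.Ioc 0 ⌊x * Real.exp η⌋₊).filter (fun n => ¬ n.Prime))
    intro n hn
    rw [hz n hn, norm_zero]

lemma key (hRH : RiemannHypothesis) : ∃ B : ℝ, 256 ≤ B ∧ ∀ x η : ℝ, Real.exp 2 ≤ x → 0 < η →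
    η ≤ 1/2 → B * Real.log x ^ 2 < η * Real.sqrt x →
    ∃ p : ℕ, p.Prime ∧ x * Real.exp (-η) < p ∧ (p:ℝ) < x * Real.exp η := by
  obtain ⟨F, hF, hpos, hd, hlog⟩ := exists_F hRH
  obtain ⟨C, hC⟩ := Chebyshev.psi_sub_theta_le_mul_sqrt
  refine ⟨4 * (200 + 2 * |C|), by linarith [abs_nonneg C], fun x η hx2 hη hη2 hB => ?_⟩
  by_contra hcon
  have hno : ∀ p : ℕ, p.Prime → x * Real.exp (-η) < p → (p:ℝ) < x * Real.exp η → False :=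
    fun p h1 h2 h3 => hcon ⟨p, h1, h2, h3⟩
  have hx0 : 0 < x := (Real.exp_pos _).trans_le hx2
  have hL : 2 ≤ Real.log x := (Real.le_log_iff_exp_le hx0).2 hx2
  have hx1 : 1 ≤ x := le_trans (Real.one_le_exp (by norm_num)) hx2
  set L := Real.log x with hLdef
  have hL0 : 0 < L := by linarith
  have hq : 1 ≤ Real.sqrt x := Real.one_le_sqrt.2 hx1
  have hqq : Real.sqrt x * Real.sqrt x = x := Real.mul_self_sqrt hx0.le
  set q := Real.sqrt x with hqdef
  have hL2 : 4 ≤ L^2 := by nlinarith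
  have hηx : 256 ≤ η * x := by
    have : 256 < η * q := by nlinarith [abs_nonneg C]
    rw [← hqq]; nlinarith
  set a : ℝ := 1/2 + 1/L with hadef
  have hLinv : 1/L ≤ 1/2 := by rw [div_le_div_iff₀ hL0 two_pos]; linarith
  have hLinv0 : 0 < 1/L := by positivity
  have herr := error_bound hF hpos hlog (a := a) (by linarith) (by linarith) hη hη2 hx1
  rw [explicit hd hη hη2 hx0, Complex.norm_real, Real.norm_eq_abs] at herr
  have hJ2 := J2_ge hη hx1
  have hJ3 := J3_le hη hx1
  have hS := S_le hC hη hx0 hno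
  set S := ∫ n : ℕ, ArithmeticFunction.vonMangoldt n * tent η (n / x) ∂Measure.count
  set J2 := ∫ y in Ioi (1:ℝ), tent η (y / x)
  set J3 := ∫ y in Ioi (1:ℝ), y⁻¹ * tent η (y / x)
  have hxa : x ^ a ≤ 3 * q := by
    rw [hadef, Real.rpow_add hx0, ← Real.sqrt_eq_rpow, ← hqdef, Real.rpow_def_of_pos hx0,
      ← hLdef, mul_one_div_cancel hL0.ne']
    nlinarith [Real.exp_one_lt_d9]
  have hlg : Real.log (128 * (a + 1/η)) ≤ L := by
    apply Real.log_le_log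
    · positivity
    · have h1 : 1 ≤ 1/η := by rw [le_div_iff₀ hη]; linarith
      have h2 : 256 * (1/η) ≤ x := by rw [mul_one_div, div_le_iff₀ hη]; linarith
      linarith
  have hπ := Real.pi_pos
  have herr2 : 2 * π * |2 * J3 - J2 + S| ≤ 2 * π * (108 * η * q * L^2) := by
    rw [abs_mul, abs_of_pos (by positivity : 0 < 2 * π)] at herr
    refine herr.trans ?_
    have : a - 1/2 = 1/L := by rw [hadef]; ring
    rw [this]
    have hlg0 : 0 ≤ Real.log (128 * (a + 1/η)) := by
      apply Real.log_nonneg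
      have : 0 < 1/η := by positivity
      linarith
    calc _ ≤ 72 * (3 * q) / (1/L) * (π * η * L) := by gcongr
      _ = _ := by field_simp; ring
  have herr3 := le_of_mul_le_mul_left herr2 (by positivity)
  have h1 := (abs_le.1 herr3).1
  have hS2 : S ≤ η * (|C| * (2 * q)) := by
    refine hS.trans ?_
    have h5 : Real.sqrt (x * Real.exp η) ≤ 2 * q := by
      rw [Real.sqrt_mul hx0.le, mul_comm]
      have : Real.sqrt (Real.exp η) ≤ 2 := by
        rw [Real.sqrt_le_left (by norm_num)]
        have : Real.exp η ≤ Real.exp 1 := Real.exp_le_exp.2 (by linarith)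
        linarith [Real.exp_one_lt_d9]
      gcongr
    have := le_abs_self C
    gcongr
  have h6 : x * η^2 / 4 ≤ η * q * (108 * L^2 + 2 * |C|) + 2 * (η * (L + η)) := by nlinarith
  have h7 : 2 * (η * (L + η)) ≤ η * q * (2 * L^2) := by
    have : L + η ≤ q * L^2 := by nlinarith
    nlinarith
  have h8 : η * q * (η * q / 4) ≤ η * q * (110 * L^2 + 2 * |C|) := by
    calc _ = x * η^2 / 4 := by rw [← hqq]; ring
      _ ≤ _ := by linarith
  have h9 := le_of_mul_le_mul_left h8 (by positivity)
  nlinarith [abs_nonneg C]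

end PG

/-- Assuming RH, `p_{n+1} - p_n ≪ p_n^{1/2} (log p_n)²`, where `p_n` is the `n`-th prime
(here indexed from `0`, so `Nat.nth Nat.Prime 0 = 2` is the first prime). -/
theorem prime_gap_bound_RH (hRH : RiemannHypothesis) :
    ∃ C : ℝ, 0 < C ∧ ∀ n : ℕ,
      ((Nat.nth Nat.Prime (n + 1) : ℝ) - Nat.nth Nat.Prime n)
        ≤ C * (Nat.nth Nat.Prime n : ℝ) ^ ((1 : ℝ) / 2) *
            Real.log (Nat.nth Nat.Prime n) ^ 2 := by
  obtain ⟨B, hB, hkey⟩ := PG.key hRH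
  refine ⟨30 * B, by linarith, fun n => ?_⟩
  have hprime : (Nat.nth Nat.Prime n).Prime := Nat.prime_nth_prime n
  have hnext : ∀ q : ℕ, q.Prime → Nat.nth Nat.Prime n < q → Nat.nth Nat.Prime (n + 1) ≤ q := by
    intro q hq hlt
    have h2 : n < Nat.count Nat.Prime q :=
      (Nat.lt_nth_iff_count_lt Nat.infinite_setOfPred_prime).2 hlt
    have h4 := Nat.nth_monotone Nat.infinite_setOfPred_prime (Nat.succ_le_of_lt h2)
    rwa [Nat.nth_count hq] at h4
  set p := Nat.nth Nat.Prime n with hp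
  rw [← Real.sqrt_eq_rpow]
  have hp2 : (2:ℝ) ≤ p := by exact_mod_cast hprime.two_le
  have hp0 : (0:ℝ) < p := by linarith
  have hl : 0.69 < Real.log p := by
    have := Real.log_le_log two_pos hp2
    linarith [Real.log_two_gt_d9]
  have hsq : 1 ≤ Real.sqrt p := Real.one_le_sqrt.2 (by linarith)
  have hss : Real.sqrt p * Real.sqrt p = p := Real.mul_self_sqrt hp0.le
  set L := Real.log p with hL
  set s := Real.sqrt p with hs
  have hL2 : 0.47 < L^2 := by nlinarith
  by_cases hη2 : 5 * B * L^2 / s ≤ 1/2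
  · set η := 5 * B * L^2 / s with hη
    have hs0 : 0 < s := by linarith
    have hη0 : 0 < η := by rw [hη]; positivity
    have hηs : η * s = 5 * B * L^2 := by rw [hη]; field_simp
    have hsbig : 256 < s := by nlinarith
    have hx : Real.exp 2 ≤ p * Real.exp η := by
      have h1 : Real.exp 2 ≤ p := by
        have e1 : Real.exp 2 = Real.exp 1 * Real.exp 1 := by rw [← Real.exp_add]; norm_num
        have := Real.exp_one_lt_d9
        have := Real.exp_pos 1
        nlinarith
      nlinarith [Real.one_le_exp hη0.le]
    have hcond : B * Real.log (p * Real.exp η) ^ 2 < η * Real.sqrt (p * Real.exp η) := by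
      rw [Real.log_mul hp0.ne' (Real.exp_pos _).ne', Real.log_exp, ← hL, Real.sqrt_mul hp0.le, ← hs]
      have h1 : 1 ≤ Real.sqrt (Real.exp η) := Real.one_le_sqrt.2 (Real.one_le_exp hη0.le)
      have h2 : (L + η)^2 ≤ (2 * L)^2 := by gcongr; linarith
      have h3 : η * s ≤ η * (s * Real.sqrt (Real.exp η)) := by
        gcongr; nlinarith
      nlinarith
    obtain ⟨q, hq, hq1, hq2⟩ := hkey (p * Real.exp η) η hx hη0 hη2 hcond
    · rw [mul_assoc, ← Real.exp_add, add_neg_cancel, Real.exp_zero, mul_one] at hq1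
      rw [mul_assoc, ← Real.exp_add] at hq2
      have h1 := hnext q hq (by exact_mod_cast hq1)
      have h1' : (Nat.nth Nat.Prime (n + 1) : ℝ) ≤ q := by exact_mod_cast h1
      have h2 : Real.exp (η + η) - 1 ≤ 6 * η := by
        have h3 := Real.add_one_le_exp (-(η + η))
        have h4 : Real.exp (η + η) * Real.exp (-(η + η)) = 1 := by rw [← Real.exp_add]; simp
        have h5 : Real.exp (η + η) ≤ Real.exp 1 := Real.exp_le_exp.2 (by linarith)
        have := Real.exp_one_lt_d9
        have := Real.exp_pos (η + η)
        nlinarith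
      calc (Nat.nth Nat.Prime (n + 1) : ℝ) - p ≤ p * (Real.exp (η + η) - 1) := by linarith
        _ ≤ p * (6 * η) := by gcongr
        _ = 6 * s * (η * s) := by rw [← hss]; ring
        _ = _ := by rw [hηs]; ring
  · push Not at hη2
    rw [lt_div_iff₀ (by linarith)] at hη2
    obtain ⟨q, hq, hq1, hq2⟩ := Nat.exists_prime_lt_and_le_two_mul p hprime.ne_zero
    have h1 := hnext q hq hq1
    have h1' : (Nat.nth Nat.Prime (n + 1) : ℝ) ≤ 2 * p := by exact_mod_cast h1.trans hq2
    have h3 : (p:ℝ) ≤ 10 * B * L^2 * s := by rw [← hss]; nlinarith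
    have h4 : 0 ≤ B * L^2 * s := by positivity
    linarith
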